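/- arXiv:1108.2354 — 2 statements merged into one kernel-verified Lean document; each statement's English description precedes it below -/
import Mathlib

section
/- Let f : T → T be a continuous map of a tree. Then every subcontinuum A of T is either asymptotically periodic under f (the sequence (f^{pn}(A)) converges in Hausdorff metric for some p ≥ 1) or asymptotically degenerate (diam f^n(A) → 0 as n → ∞), or both. -/
open Set Filter Metric Topology TopologicalSpace

/-- An arc: a subset homeomorphic to `[0,1]`. -/
def IsArc {T : Type*} [TopologicalSpace T] (A : Set T) : Prop :=
  Nonempty (↥(Set.Icc (0:ℝ) 1) ≃ₜ ↥A)

/-- An arc with endpoints `x` and `y`. -/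
def IsArcBetween {T : Type*} [TopologicalSpace T] (A : Set T) (x y : T) : Prop :=
  ∃ e : ↥(Set.Icc (0:ℝ) 1) ≃ₜ ↥A,
    ((e ⟨0, by norm_num⟩ : ↥A) : T) = x ∧ ((e ⟨1, by norm_num⟩ : ↥A) : T) = y

/-- A tree: a continuum which is uniquely arcwise connected and is a point or a
union of finitely many arcs. -/
structure IsTreeSpace (T : Type*) [MetricSpace T] : Prop where
  compact : CompactSpace T
  conn : ConnectedSpace T
  uniqueArc : ∀ x y : T, x ≠ y → ∃! A : Set T, IsArcBetween A x y
  finiteArcs : (∃ x : T, (Set.univ : Set T) = {x}) ∨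
    ∃ s : Finset (Set T), (∀ A ∈ s, IsArc A) ∧ ⋃₀ (s : Set (Set T)) = Set.univ

/-- The unique arc from `x` to `y` in a tree. -/
noncomputable def treeArc {T : Type*} [MetricSpace T] (hT : IsTreeSpace T) (x y : T) :
    Set T := by
  classical exact if h : x = y then {x} else (hT.uniqueArc x y h).choose

/-- `Comp B x` : the connected component of `x` in `B` if `x ∈ B`, else `{x}`. -/
noncomputable def Comp {T : Type*} [TopologicalSpace T] (B : Set T) (x : T) : Set T := by
  classical exact if x ∈ B then connectedComponentIn B x else {x}

/-- `x` is an endpoint of the whole space (valence one). -/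
def IsEnd {T : Type*} [TopologicalSpace T] (x : T) : Prop :=
  IsConnected ({x}ᶜ : Set T)

/-- `x` is a cut-point of the whole space (valence at least two). -/
def IsCut {T : Type*} [TopologicalSpace T] (x : T) : Prop :=
  ¬ IsPreconnected ({x}ᶜ : Set T)

/-- `x` is an endpoint of the subspace `S` (valence one in `S`). -/
def IsEndpointOf {T : Type*} [TopologicalSpace T] (S : Set T) (x : T) : Prop :=
  x ∈ S ∧ IsConnected (S \ {x})

/-- A subcontinuum: a nonempty compact connected subset. -/
def IsSubcontinuum {T : Type*} [TopologicalSpace T] (A : Set T) : Prop :=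
  A.Nonempty ∧ IsCompact A ∧ IsConnected A

/-- Attracting fixed point. -/
def IsAFP {T : Type*} [TopologicalSpace T] (f : T → T) (x : T) : Prop :=
  f x = x ∧ ∀ U : Set T, IsOpen U → x ∈ U →
    ∃ V : Set T, IsOpen V ∧ x ∈ V ∧ V ⊆ U ∧ f '' closure V ⊆ V

/-- `A` is asymptotically periodic under `f`: for some `p ≥ 1` the sequence
`f^{pn}(A)` converges in the Hausdorff metric (to a nonempty compact set). -/
def AsympPeriodic {T : Type*} [MetricSpace T] (f : T → T) (A : Set T) : Prop :=
  ∃ p : ℕ, 1 ≤ p ∧ ∃ L : Set T, L.Nonempty ∧ IsCompact L ∧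
    Tendsto (fun n : ℕ => hausdorffDist (f^[p * n] '' A) L) atTop (𝓝 0)

/-- Kuratowski lower limit of a sequence of sets. -/
def KLiminf {T : Type*} [TopologicalSpace T] (A : ℕ → Set T) : Set T :=
  {x | ∀ U : Set T, IsOpen U → x ∈ U → ∀ᶠ n in atTop, (U ∩ A n).Nonempty}

/-- Kuratowski upper limit of a sequence of sets. -/
def KLimsup {T : Type*} [TopologicalSpace T] (A : ℕ → Set T) : Set T :=
  {x | ∀ U : Set T, IsOpen U → x ∈ U → ∃ᶠ n in atTop, (U ∩ A n).Nonempty}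

/-- Convergence in the hyperspace: the Kuratowski lower and upper limits agree. -/
def KConv {T : Type*} [TopologicalSpace T] (A : ℕ → Set T) : Prop :=
  KLiminf A = KLimsup A

/-- Set-theoretic limit superior of the iterated images of `A`. -/
def Ls {T : Type*} (f : T → T) (A : Set T) : Set T :=
  ⋂ m : ℕ, ⋃ n : ℕ, ⋃ (_ : m ≤ n), f^[n] '' A

/-- The hyperspace of subcontinua of `T`, with the Hausdorff metric. -/
abbrev SubCon (T : Type*) [MetricSpace T] :=
  {A : NonemptyCompacts T // IsConnected (A.1 : Set T)}

/-- The induced map on the hyperspace of subcontinua. -/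
noncomputable def indCon {T : Type*} [MetricSpace T] (f : T → T) (hf : Continuous f) :
    SubCon T → SubCon T :=
  fun A => ⟨⟨⟨f '' (A.1 : Set T), A.1.isCompact.image hf⟩, A.1.nonempty.image f⟩,
    A.2.image f hf.continuousOn⟩

/-- Topological entropy (Bowen–Dinaburg) of `f` on the subset `S`. -/
noncomputable def entropyOn {X : Type*} [MetricSpace X] (f : X → X) (S : Set X) : EReal :=
  Dynamics.coverEntropy f S

/-- Topological entropy of `f`. -/
noncomputable def entropy {X : Type*} [MetricSpace X] (f : X → X) : EReal :=
  Dynamics.coverEntropy f Set.univ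

/-- Maximal cardinality of an `(n,f,ε)`-separated subset of `S`. -/
noncomputable def sepNumOn {X : Type*} [MetricSpace X] (f : X → X) (S : Set X)
    (n : ℕ) (ε : ℝ) : ℕ :=
  sSup {k : ℕ | ∃ E : Finset X, ↑E ⊆ S ∧
    (∀ x ∈ E, ∀ y ∈ E, x ≠ y → ∃ j < n, ε < dist (f^[j] x) (f^[j] y)) ∧ E.card = k}

/-- Minimal cardinality of an `(n,f,ε)`-spanning subset of `S`. -/
noncomputable def spanNumOn {X : Type*} [MetricSpace X] (f : X → X) (S : Set X)
    (n : ℕ) (ε : ℝ) : ℕ :=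
  sInf {k : ℕ | ∃ F : Finset X, ↑F ⊆ S ∧
    (∀ x ∈ S, ∃ y ∈ F, ∀ j < n, dist (f^[j] x) (f^[j] y) ≤ ε) ∧ F.card = k}

noncomputable def sepNum {X : Type*} [MetricSpace X] (f : X → X) (n : ℕ) (ε : ℝ) : ℕ :=
  sepNumOn f Set.univ n ε

noncomputable def spanNum {X : Type*} [MetricSpace X] (f : X → X) (n : ℕ) (ε : ℝ) : ℕ :=
  spanNumOn f Set.univ n ε

/-- The graph of a map. -/
def graphOf {X : Type*} (φ : X → X) : Set (X × X) := {p | p.2 = φ p.1}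

/-- The functional envelope: the closure, in the hyperspace of nonempty compact
subsets of `X × X` with the Hausdorff metric, of the set of graphs of continuous
self-maps of `X`. -/
def FunctionalEnvelope (X : Type*) [MetricSpace X] :
    Set (NonemptyCompacts (X × X)) :=
  closure {G : NonemptyCompacts (X × X) | ∃ φ : X → X, Continuous φ ∧
    (G : Set (X × X)) = graphOf φ}

/-- `F` is the map induced by `f` on the functional envelope:
`F(φ) = f ∘ φ`, i.e. on graphs, `F(G) = (id × f)(G)`. -/
def IsEnvelopeMap {X : Type*} [MetricSpace X] (f : X → X)
    (F : ↥(FunctionalEnvelope X) → ↥(FunctionalEnvelope X)) : Prop :=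
  ∀ G : ↥(FunctionalEnvelope X),
    ((F G : NonemptyCompacts (X × X)) : Set (X × X)) =
      Prod.map id f '' ((G : NonemptyCompacts (X × X)) : Set (X × X))

/-- The setoid on `T` identifying all points of `M` (so that `Quotient` is `T/M`). -/
def collapseSetoid {T : Type*} (M : Set T) : Setoid T where
  r a b := a = b ∨ (a ∈ M ∧ b ∈ M)
  iseqv := by
    refine ⟨fun a => Or.inl rfl, ?_, ?_⟩
    · rintro a b (rfl | ⟨h1, h2⟩)
      exacts [Or.inl rfl, Or.inr ⟨h2, h1⟩]
    · rintro a b c (rfl | ⟨h1, h2⟩) h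
      · exact h
      · rcases h with rfl | ⟨h3, h4⟩
        exacts [Or.inr ⟨h1, h2⟩, Or.inr ⟨h1, h4⟩]

/-!
Write `[x, y]` for the arc from `x` to `y` and order the tree from a root `c` by `x ≤ y` iff
`x ∈ [c, y]`. A tree is covered by finitely many arcs `[c, e]`, so among `N + 1` points two are
comparable, where `N` does not depend on `c`.

*Some iterate of `A` meets a cycle.* Passing to an iterate of `f`, some image `B` of `A` contains
a fixed point `c`, the root. Let `b ∈ B`. Any `N + 1` consecutive iterates of `b` contain a
comparable pair `f^s b`, `f^(s+p) b`. If `f^s b ≤ f^(s+p) b`, then `[c, f^(s+p) b]` is covered by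
its own image under `f^p`, so `f^n b` stays in `f^(n+pk)(B)` for all `k` once `n ≥ s + p`. If
`f^(s+p) b ≤ f^s b`, then `f^(s+p) b` already lies in the connected set `f^s(B) ∋ c`, and the
detour of length `p` can be cut out of the orbit of `b`. Hence, for `P = N!` and `n` large, a point
of `f^(n+P)(B)` either lies in `f^n(B)` or lies in `f^(n+P+Pk)(B)` for all `k`. A sequence of
compact sets with this property converges.

*No iterate of `A` meets a cycle.* If the diameters do not tend to `0`, then two of the images
overlap, say `f^m(A)` and `f^(m+q)(A)`. With `g = f^q`, the union `X` of the sets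
`g^n(f^m(A))` is connected and invariant. Starting from a point of `X`, the points moved away from
it by `g` accumulate at a fixed point `c ∉ X`, which `X` approaches along a single arc. So `c` is
attracting from `X`, and every orbit in `X` gets there: an orbit staying away could be replaced by
one whose points are pairwise equal or incomparable from `c`, which is eventually periodic. By
compactness `g^n(f^m(A))` shrinks to `c`, and the diameters tend to `0` after all.
-/

section Arc

variable {T : Type*} [TopologicalSpace T] {S A : Set T} {x y z : T}

/-- `x` and `y` are the ends of a possibly degenerate arc contained in `S`: the analogue of
`JoinedIn` for injective paths. The parameter interval is left free, so that arcs can be cut and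
concatenated without rescaling. -/
def ArcJoinedIn (S : Set T) (x y : T) : Prop :=
  ∃ (γ : ℝ → T) (a b : ℝ), a ≤ b ∧ ContinuousOn γ (Icc a b) ∧ InjOn γ (Icc a b) ∧
    γ a = x ∧ γ b = y ∧ MapsTo γ (Icc a b) S

lemma ArcJoinedIn.refl (hx : x ∈ S) : ArcJoinedIn S x x :=
  ⟨fun _ => x, 0, 0, le_rfl, continuousOn_const, by simp, rfl, rfl, fun _ _ => hx⟩

lemma ArcJoinedIn.symm : ArcJoinedIn S x y → ArcJoinedIn S y x := by
  rintro ⟨γ, a, b, hab, hc, hi, rfl, rfl, hS⟩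
  have hneg : MapsTo (fun t : ℝ => -t) (Icc (-b) (-a)) (Icc a b) := fun t ht =>
    ⟨by linarith [ht.2], by linarith [ht.1]⟩
  exact ⟨fun t => γ (-t), -b, -a, neg_le_neg hab, hc.comp continuous_neg.continuousOn hneg,
    hi.comp neg_injective.injOn hneg, by simp, by simp, hS.comp hneg⟩

lemma arcJoinedIn_of_uIcc {γ : ℝ → T} {a b : ℝ} (hc : ContinuousOn γ (uIcc a b))
    (hi : InjOn γ (uIcc a b)) (hS : MapsTo γ (uIcc a b) S) : ArcJoinedIn S (γ a) (γ b) := by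
  rcases le_total a b with hab | hba
  · rw [uIcc_of_le hab] at hc hi hS
    exact ⟨γ, a, b, hab, hc, hi, rfl, rfl, hS⟩
  · rw [uIcc_of_ge hba] at hc hi hS
    exact ArcJoinedIn.symm ⟨γ, b, a, hba, hc, hi, rfl, rfl, hS⟩

lemma ArcJoinedIn.glue {γ δ : ℝ → T} {a t b : ℝ} (hat : a ≤ t) (htb : t ≤ b)
    (hγc : ContinuousOn γ (Icc a t)) (hγi : InjOn γ (Icc a t)) (hγS : MapsTo γ (Icc a t) S)
    (hδc : ContinuousOn δ (Icc t b)) (hδi : InjOn δ (Icc t b)) (hδS : MapsTo δ (Icc t b) S)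
    (hγδ : γ t = δ t) (hcross : ∀ u ∈ Icc a t, ∀ v ∈ Icc t b, γ u = δ v → u = v) :
    ArcJoinedIn S (γ a) (δ b) := by
  have hl : EqOn (fun u => if u ≤ t then γ u else δ u) γ (Icc a t) := fun u hu => if_pos hu.2
  have hr : EqOn (fun u => if u ≤ t then γ u else δ u) δ (Icc t b) := by
    intro u hu
    rcases hu.1.eq_or_lt with rfl | htu
    · simp [hγδ]
    · exact if_neg htu.not_ge
  refine ⟨fun u => if u ≤ t then γ u else δ u, a, b, hat.trans htb, ?_, ?_,
    hl (left_mem_Icc.2 hat), hr (right_mem_Icc.2 htb), ?_⟩ <;>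
    rw [← Icc_union_Icc_eq_Icc hat htb]
  · exact (hγc.congr hl).union_of_isClosed (hδc.congr hr) isClosed_Icc isClosed_Icc
  · rintro u (hu | hu) v (hv | hv) huv
    · exact hγi hu hv (by rwa [hl hu, hl hv] at huv)
    · exact hcross u hu v hv (by rwa [hl hu, hr hv] at huv)
    · exact (hcross v hv u hu (by rwa [hr hu, hl hv, eq_comm] at huv)).symm
    · exact hδi hu hv (by rwa [hr hu, hr hv] at huv)
  · exact (hγS.congr hl.symm).union (hδS.congr hr.symm)

lemma ArcJoinedIn.trans [T2Space T] :
    ArcJoinedIn S x y → ArcJoinedIn S y z → ArcJoinedIn S x z := by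
  rintro ⟨γ, a, b, hab, hγc, hγi, rfl, rfl, hγS⟩ ⟨δ, c, d, hcd, hδc, hδi, hδ, rfl, hδS⟩
  have hclosed : IsClosed (δ '' Icc c d) := (isCompact_Icc.image_of_continuousOn hδc).isClosed
  have hcompact : IsCompact (Icc a b ∩ γ ⁻¹' (δ '' Icc c d)) :=
    isCompact_Icc.of_isClosed_subset (hγc.preimage_isClosed_of_isClosed isClosed_Icc hclosed)
      inter_subset_left
  obtain ⟨t, ⟨ht, s, hs, hst⟩, hfirst⟩ := hcompact.exists_isLeast
    ⟨b, right_mem_Icc.2 hab, c, left_mem_Icc.2 hcd, hδ⟩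
  have hshift : MapsTo (fun u => u - t + s) (Icc t (t + d - s)) (Icc c d) := fun u hu =>
    ⟨by linarith [hu.1, hs.1], by linarith [hu.2]⟩
  have hIcc : Icc a t ⊆ Icc a b := Icc_subset_Icc_right ht.2
  have hend : δ (t + d - s - t + s) = δ d := by congr 1; ring
  rw [← hend]
  refine ArcJoinedIn.glue (δ := fun u => δ (u - t + s)) ht.1 (by linarith [hs.2]) (hγc.mono hIcc)
    (hγi.mono hIcc) (hγS.mono_left hIcc) (hδc.comp (by fun_prop) hshift)
    (hδi.comp (fun u _ v _ huv => by linarith) hshift) (hδS.comp hshift) (by simp [hst]) ?_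
  intro u hu v hv huv
  obtain rfl : u = t := hu.2.antisymm (hfirst ⟨hIcc hu, _, hshift hv, huv.symm⟩)
  linarith [hδi hs (hshift hv) (hst.trans huv)]

lemma isArcBetween_image_Icc [T2Space T] {γ : ℝ → T} {a b : ℝ} (hab : a < b)
    (hc : ContinuousOn γ (Icc a b)) (hi : InjOn γ (Icc a b)) :
    IsArcBetween (γ '' Icc a b) (γ a) (γ b) := by
  have hemb : IsEmbedding ((Icc a b).domRestrict γ) :=
    (hc.domRestrict.isClosedEmbedding hi.injective).isEmbedding
  refine ⟨(iccHomeoI a b hab).symm.trans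
    (hemb.toHomeomorph.trans (Homeomorph.setCongr (range_domRestrict γ _))), ?_, ?_⟩
  · change γ ((iccHomeoI a b hab).symm ⟨0, _⟩) = γ a
    simp
  · change γ ((iccHomeoI a b hab).symm ⟨1, _⟩) = γ b
    simp

lemma IsArcBetween.exists_param (h : IsArcBetween A x y) :
    ∃ γ : ℝ → T, Continuous γ ∧ InjOn γ (Icc 0 1) ∧ γ 0 = x ∧ γ 1 = y ∧ A ⊆ γ '' Icc 0 1 := by
  obtain ⟨e, rfl, rfl⟩ := h
  refine ⟨IccExtend zero_le_one fun u => (e u : T),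
    (continuous_subtype_val.comp e.continuous).Icc_extend', ?_, ?_, ?_, fun p hp => ?_⟩
  · intro s hs t ht hst
    rw [IccExtend_of_mem _ _ hs, IccExtend_of_mem _ _ ht] at hst
    exact congrArg Subtype.val (e.injective (Subtype.ext hst))
  · rw [IccExtend_of_mem _ _ (left_mem_Icc.2 zero_le_one)]
  · rw [IccExtend_of_mem _ _ (right_mem_Icc.2 zero_le_one)]
  · exact ⟨e.symm ⟨p, hp⟩, (e.symm ⟨p, hp⟩).2, by simp⟩

lemma arcJoinedIn_of_injective {e : Icc (0 : ℝ) 1 → T} (hc : Continuous e)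
    (hi : Function.Injective e) {s u : Icc (0 : ℝ) 1} (hS : MapsTo e (uIcc s u) S) :
    ArcJoinedIn S (e s) (e u) := by
  have hsub : uIcc (s : ℝ) u ⊆ Icc 0 1 := ordConnected_Icc.uIcc_subset s.2 u.2
  have hproj : MapsTo (projIcc (0 : ℝ) 1 zero_le_one) (uIcc (s : ℝ) u) (uIcc s u) := by
    intro t ht
    rw [projIcc_of_mem zero_le_one (hsub ht)]
    exact mem_uIcc.2 (mem_uIcc.1 ht)
  have hinj : InjOn (IccExtend zero_le_one e) (uIcc (s : ℝ) u) := by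
    intro t ht t' ht' htt'
    rw [IccExtend_of_mem _ _ (hsub ht), IccExtend_of_mem _ _ (hsub ht')] at htt'
    exact congrArg Subtype.val (hi htt')
  simpa only [IccExtend_val] using
    arcJoinedIn_of_uIcc hc.Icc_extend'.continuousOn hinj (hS.comp hproj)

lemma IsArc.eventually_arcJoinedIn [T2Space T] (hA : IsArc A) (hS : S ∈ 𝓝 x) :
    ∀ᶠ y in 𝓝[A] x, ArcJoinedIn S x y := by
  obtain ⟨e⟩ := hA
  by_cases hx : x ∈ A
  swap
  · have hclosed : IsClosed A := (isCompact_iff_compactSpace.2 e.compactSpace).isClosed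
    simp [notMem_closure_iff_nhdsWithin_eq_bot.1 (hclosed.closure_eq.symm ▸ hx)]
  obtain ⟨s, hs⟩ := e.surjective ⟨x, hx⟩
  have hsx : (e s : T) = x := congrArg Subtype.val hs
  have hmap : 𝓝[A] x = map (fun u => (e u : T)) (𝓝 s) := by
    rw [nhdsWithin_eq_map_subtype_coe hx, ← hs, ← e.map_nhds_eq, Filter.map_map]
    rfl
  have hγ : Continuous fun u => (e u : T) := continuous_subtype_val.comp e.continuous
  have hsmall : ∀ᶠ u in 𝓝 s, MapsTo (fun u => (e u : T)) (uIcc s u) S :=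
    (tendsto_const_nhds.uIcc tendsto_id).eventually
      (eventually_smallSets_subset.2 (hγ.continuousAt (hsx ▸ hS)))
  rw [hmap, Filter.eventually_map]
  filter_upwards [hsmall] with u hu
  exact hsx ▸ arcJoinedIn_of_injective hγ (Subtype.val_injective.comp e.injective) hu

end Arc

section ConnHull

variable {T : Type*} [TopologicalSpace T] {x y : T} {C : Set T}

/-- The intersection of all connected sets containing `x` and `y`. In a tree it is the arc from
`x` to `y`, degenerate arcs included, and `z ∈ connHull x y` says that `z` is between `x` and
`y`. -/
def connHull (x y : T) : Set T :=
  ⋂₀ {C | IsPreconnected C ∧ x ∈ C ∧ y ∈ C}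

lemma connHull_subset (hC : IsPreconnected C) (hx : x ∈ C) (hy : y ∈ C) : connHull x y ⊆ C :=
  sInter_subset_of_mem ⟨hC, hx, hy⟩

lemma left_mem_connHull : x ∈ connHull x y := fun _ hC => hC.2.1

lemma right_mem_connHull : y ∈ connHull x y := fun _ hC => hC.2.2

lemma connHull_comm (x y : T) : connHull x y = connHull y x := by
  simp only [connHull, and_comm]

lemma connHull_self (x : T) : connHull x x = {x} :=
  (connHull_subset isPreconnected_singleton rfl rfl).antisymm
    (singleton_subset_iff.2 left_mem_connHull)

lemma connHull_subset_insert {X : Set T} {a c : T} (hX : IsPreconnected X) (ha : a ∈ X)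
    (hc : c ∈ closure X) : connHull c a ⊆ insert c X :=
  connHull_subset (hX.subset_closure (subset_insert c X) (insert_subset hc subset_closure))
    (mem_insert c X) (mem_insert_of_mem c ha)

lemma ArcJoinedIn.connHull_subset {S : Set T} (h : ArcJoinedIn S x y) : connHull x y ⊆ S := by
  obtain ⟨γ, a, b, hab, hc, -, rfl, rfl, hS⟩ := h
  exact (_root_.connHull_subset (isPreconnected_Icc.image γ hc) ⟨a, left_mem_Icc.2 hab, rfl⟩
    ⟨b, right_mem_Icc.2 hab, rfl⟩).trans hS.image_subset

end ConnHull

namespace IsTreeSpace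

variable {T : Type*} [MetricSpace T] {a x y z m w p q : T} {C : Set T}

lemma eventually_arcJoinedIn (hT : IsTreeSpace T) {S : Set T} (hS : S ∈ 𝓝 x) :
    ∀ᶠ y in 𝓝 x, ArcJoinedIn S x y := by
  rcases hT.finiteArcs with ⟨p, hp⟩ | ⟨s, hs, hU⟩
  · have hall : ∀ q, q = p := fun q => by simpa [hp] using mem_univ q
    refine Eventually.of_forall fun y => ?_
    rw [hall y, ← hall x]
    exact ArcJoinedIn.refl (mem_of_mem_nhds hS)
  · rw [← nhdsWithin_univ x, ← hU, nhdsWithin_sUnion s.finite_toSet]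
    simp only [Filter.eventually_iSup]
    exact fun A hA => (hs A hA).eventually_arcJoinedIn hS

lemma arcJoinedIn_compl_singleton (hT : IsTreeSpace T) (hC : IsPreconnected C) (hx : x ∈ C)
    (hy : y ∈ C) (hz : z ∉ C) : ArcJoinedIn {z}ᶜ x y :=
  hC.induction₂ (ArcJoinedIn {z}ᶜ)
    (fun p hp => (hT.eventually_arcJoinedIn (isOpen_compl_singleton.mem_nhds
      fun h : p = z => hz (h ▸ hp))).filter_mono nhdsWithin_le_nhds)
    (fun _ _ _ _ _ _ => ArcJoinedIn.trans) (fun _ _ _ _ => ArcJoinedIn.symm) hx hy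

lemma image_Icc_subset (hT : IsTreeSpace T) {γ : ℝ → T} {a b : ℝ} (hab : a ≤ b)
    (hc : ContinuousOn γ (Icc a b)) (hi : InjOn γ (Icc a b)) (hC : IsPreconnected C)
    (ha : γ a ∈ C) (hb : γ b ∈ C) : γ '' Icc a b ⊆ C := by
  rcases hab.eq_or_lt with rfl | hlt
  · simpa using ha
  intro z hz
  by_contra hzC
  have hne : γ a ≠ γ b := fun h => hlt.ne (hi (left_mem_Icc.2 hab) (right_mem_Icc.2 hab) h)
  obtain ⟨δ, r, s, hrs, hδc, hδi, hr, hs, hδz⟩ := hT.arcJoinedIn_compl_singleton hC ha hb hzC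
  have hlt' : r < s := by
    refine hrs.lt_of_ne ?_
    rintro rfl
    exact hne (hr.symm.trans hs)
  have hδ := isArcBetween_image_Icc hlt' hδc hδi
  rw [hr, hs] at hδ
  rw [← (hT.uniqueArc _ _ hne).unique hδ (isArcBetween_image_Icc hlt hc hi)] at hz
  exact hδz.image_subset hz rfl

lemma connHull_eq_image_uIcc (hT : IsTreeSpace T) {γ : ℝ → T} {s t : ℝ}
    (hc : ContinuousOn γ (uIcc s t)) (hi : InjOn γ (uIcc s t)) :
    connHull (γ s) (γ t) = γ '' uIcc s t := by
  refine (connHull_subset (isPreconnected_uIcc.image γ hc) (mem_image_of_mem _ left_mem_uIcc)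
    (mem_image_of_mem _ right_mem_uIcc)).antisymm (subset_sInter ?_)
  rintro C ⟨hC, hs, ht⟩
  rcases le_total s t with hst | hts
  · rw [uIcc_of_le hst] at *
    exact hT.image_Icc_subset hst hc hi hC hs ht
  · rw [uIcc_of_ge hts] at *
    exact hT.image_Icc_subset hts hc hi hC ht hs

lemma exists_param (hT : IsTreeSpace T) (x y : T) :
    ∃ γ : ℝ → T, Continuous γ ∧ γ 0 = x ∧ γ 1 = y ∧
      ∀ s ∈ Icc (0 : ℝ) 1, ∀ t ∈ Icc (0 : ℝ) 1, connHull (γ s) (γ t) = γ '' uIcc s t := by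
  rcases eq_or_ne x y with rfl | hxy
  · refine ⟨fun _ => x, continuous_const, rfl, rfl, fun s _ t _ => ?_⟩
    rw [connHull_self, nonempty_uIcc.image_const]
  · obtain ⟨A, hA, -⟩ := hT.uniqueArc x y hxy
    obtain ⟨γ, hc, hi, h0, h1, -⟩ := hA.exists_param
    exact ⟨γ, hc, h0, h1, fun s hs t ht => hT.connHull_eq_image_uIcc hc.continuousOn
      (hi.mono (ordConnected_Icc.uIcc_subset hs ht))⟩

lemma isCompact_connHull (hT : IsTreeSpace T) (x y : T) : IsCompact (connHull x y) := by
  obtain ⟨γ, hc, rfl, rfl, hγ⟩ := hT.exists_param x y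
  rw [hγ 0 (by simp) 1 (by simp)]
  exact isCompact_uIcc.image hc

lemma isPreconnected_connHull (hT : IsTreeSpace T) (x y : T) :
    IsPreconnected (connHull x y) := by
  obtain ⟨γ, hc, rfl, rfl, hγ⟩ := hT.exists_param x y
  rw [hγ 0 (by simp) 1 (by simp)]
  exact isPreconnected_uIcc.image _ hc.continuousOn

lemma connHull_subset_connHull (hT : IsTreeSpace T) (hp : p ∈ connHull x y)
    (hq : q ∈ connHull x y) : connHull p q ⊆ connHull x y :=
  connHull_subset (hT.isPreconnected_connHull x y) hp hq

lemma connHull_subset_union (hT : IsTreeSpace T) (x y z : T) :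
    connHull x y ⊆ connHull x z ∪ connHull z y :=
  connHull_subset ((hT.isPreconnected_connHull x z).union z right_mem_connHull left_mem_connHull
    (hT.isPreconnected_connHull z y)) (Or.inl left_mem_connHull) (Or.inr right_mem_connHull)

lemma mem_connHull_or (hT : IsTreeSpace T) (hz : z ∈ connHull x y) (hm : m ∈ connHull x y) :
    z ∈ connHull x m ∨ m ∈ connHull x z := by
  obtain ⟨γ, -, rfl, rfl, hγ⟩ := hT.exists_param x y
  rw [hγ 0 (by simp) 1 (by simp), uIcc_of_le zero_le_one] at hz hm
  obtain ⟨s, hs, rfl⟩ := hz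
  obtain ⟨t, ht, rfl⟩ := hm
  rw [hγ 0 (by simp) t ht, hγ 0 (by simp) s hs, uIcc_of_le hs.1, uIcc_of_le ht.1]
  exact (le_total s t).imp (fun h => ⟨s, ⟨hs.1, h⟩, rfl⟩) fun h => ⟨t, ⟨ht.1, h⟩, rfl⟩

lemma eq_of_mem_connHull (hT : IsTreeSpace T) (hz : z ∈ connHull x y)
    (hxz : m ∈ connHull x z) (hzy : m ∈ connHull z y) : m = z := by
  obtain ⟨γ, -, rfl, rfl, hγ⟩ := hT.exists_param x y
  rw [hγ 0 (by simp) 1 (by simp), uIcc_of_le zero_le_one] at hz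
  obtain ⟨s, hs, rfl⟩ := hz
  rw [hγ 0 (by simp) s hs, uIcc_of_le hs.1] at hxz
  rw [hγ s hs 1 (by simp), uIcc_of_le hs.2] at hzy
  obtain ⟨u, hu, rfl⟩ := hxz
  obtain ⟨v, hv, huv⟩ := hzy
  have hmid : γ s ∈ connHull (γ u) (γ v) := by
    rw [hγ u ⟨hu.1, hu.2.trans hs.2⟩ v ⟨hs.1.trans hv.1, hv.2⟩]
    exact mem_image_of_mem γ (mem_uIcc.2 (Or.inl ⟨hu.2, hv.1⟩))
  rw [huv, connHull_self] at hmid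
  exact hmid.symm

lemma mem_connHull_antisymm (hT : IsTreeSpace T) (hxy : x ∈ connHull a y)
    (hyx : y ∈ connHull a x) : x = y :=
  (hT.eq_of_mem_connHull hxy hyx right_mem_connHull).symm

lemma mem_connHull_trans_left (hT : IsTreeSpace T) (hxy : x ∈ connHull a y)
    (hyz : y ∈ connHull a z) : x ∈ connHull a z :=
  hT.connHull_subset_connHull left_mem_connHull hyz hxy

lemma mem_connHull_trans_right_left (hT : IsTreeSpace T) (hx : x ∈ connHull a w)
    (hm : m ∈ connHull x w) : x ∈ connHull a m := by
  have hmw : m ∈ connHull a w := hT.connHull_subset_connHull hx right_mem_connHull hm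
  rcases hT.mem_connHull_or hx hmw with hxm | hmx
  · exact hxm
  · rw [hT.eq_of_mem_connHull hx hmx hm]
    exact right_mem_connHull

lemma mem_connHull_trans_left_right (hT : IsTreeSpace T) (hx : x ∈ connHull a w)
    (hm : m ∈ connHull a x) : x ∈ connHull m w := by
  rw [connHull_comm] at hx hm ⊢
  exact hT.mem_connHull_trans_right_left hx hm

lemma eventually_connHull_subset (hT : IsTreeSpace T) {V : Set T} (hV : V ∈ 𝓝 x) :
    ∀ᶠ y in 𝓝 x, connHull x y ⊆ V :=
  (hT.eventually_arcJoinedIn hV).mono fun _ h => h.connHull_subset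

lemma eventually_notMem_connHull (hT : IsTreeSpace T) (hxz : x ≠ z) :
    ∀ᶠ y in 𝓝 x, z ∉ connHull x y :=
  (hT.eventually_connHull_subset (isOpen_compl_singleton.mem_nhds hxz)).mono
    fun _ hy hz => hy hz rfl

lemma isOpen_notMem_connHull (hT : IsTreeSpace T) (a z : T) : IsOpen {w | z ∉ connHull a w} := by
  refine isOpen_iff_mem_nhds.2 fun w hw => ?_
  have hwz : w ≠ z := fun h => hw (h ▸ right_mem_connHull)
  filter_upwards [hT.eventually_notMem_connHull hwz] with v hv hzv
  exact (hT.connHull_subset_union a v w hzv).elim hw hv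

lemma isOpen_mem_connHull_ne (hT : IsTreeSpace T) (a m : T) :
    IsOpen {w | m ∈ connHull a w ∧ w ≠ m} := by
  refine isOpen_iff_mem_nhds.2 fun w hw => ?_
  filter_upwards [hT.eventually_notMem_connHull hw.2] with v hv
  refine ⟨(hT.connHull_subset_union a w v hw.1).resolve_right ?_, ?_⟩
  · rwa [connHull_comm]
  · rintro rfl
    exact hv right_mem_connHull

lemma frequently_mem_connHull (hT : IsTreeSpace T) (hxy : x ≠ y) :
    ∃ᶠ w in 𝓝[≠] x, w ∈ connHull x y :=
  accPt_iff_frequently_nhdsNE.1 ((hT.isPreconnected_connHull x y).preperfect_of_nontrivial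
    ⟨x, left_mem_connHull, y, right_mem_connHull, hxy⟩ x left_mem_connHull)

lemma exists_mem_connHull_ne (hT : IsTreeSpace T) (hxy : x ≠ y) :
    ∃ m ∈ connHull x y, m ≠ x ∧ m ≠ y := by
  obtain ⟨m, ⟨hm, hmy⟩, hmx⟩ := (((hT.frequently_mem_connHull hxy).and_eventually
    (eventually_ne_nhdsWithin hxy)).and_eventually self_mem_nhdsWithin).exists
  exact ⟨m, hm, hmx, hmy⟩

lemma isClosed_mem_connHull (hT : IsTreeSpace T) (a : T) :
    IsClosed {p : T × T | p.1 ∈ connHull a p.2} := by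
  refine ⟨isOpen_iff_mem_nhds.2 ?_⟩
  rintro ⟨x, y⟩ (hxy : x ∉ connHull a y)
  have hxa : x ≠ a := fun h => hxy (h ▸ left_mem_connHull)
  obtain ⟨w, ⟨hwx, hwy⟩, hne⟩ := (((hT.frequently_mem_connHull hxa).and_eventually
    (nhdsWithin_le_nhds ((hT.isCompact_connHull a y).isClosed.isOpen_compl.mem_nhds
      hxy))).and_eventually self_mem_nhdsWithin).exists
  rw [connHull_comm] at hwx
  filter_upwards [prod_mem_nhds
    ((hT.isOpen_mem_connHull_ne a w).mem_nhds ⟨hwx, Ne.symm hne⟩)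
    ((hT.isOpen_notMem_connHull a w).mem_nhds hwy)] with p hp hmem
  exact hp.2 (hT.mem_connHull_trans_left hp.1.1 hmem)

lemma subset_connHull_of_isArcBetween (hT : IsTreeSpace T) {A : Set T}
    (hA : IsArcBetween A x y) : A ⊆ connHull x y := by
  obtain ⟨γ, hc, hi, rfl, rfl, hAγ⟩ := hA.exists_param
  rw [← uIcc_of_le (zero_le_one' ℝ)] at hi hAγ
  rwa [hT.connHull_eq_image_uIcc hc.continuousOn hi]

lemma exists_finset_forall_mem_connHull (hT : IsTreeSpace T) :
    ∃ E : Finset T, ∀ c x, ∃ e ∈ E, x ∈ connHull c e := by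
  classical
  rcases hT.finiteArcs with ⟨p, hp⟩ | ⟨s, hs, hU⟩
  · exact ⟨{p}, fun c x => ⟨p, by simp, (by simpa [hp] using mem_univ x : x = p) ▸
      right_mem_connHull⟩⟩
  have hends : ∀ A ∈ s, ∃ p q, IsArcBetween A p q := fun A hA =>
    (hs A hA).elim fun e => ⟨_, _, e, rfl, rfl⟩
  have := hT.conn.toNonempty
  choose! p q hpq using hends
  refine ⟨s.image p ∪ s.image q, fun c x => ?_⟩
  obtain ⟨A, hA, hxA⟩ := mem_sUnion.1 (hU ▸ mem_univ x)
  rcases hT.connHull_subset_union _ _ c (hT.subset_connHull_of_isArcBetween (hpq A hA) hxA)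
    with hx | hx
  · rw [connHull_comm] at hx
    exact ⟨_, Finset.mem_union_left _ (Finset.mem_image_of_mem _ hA), hx⟩
  · exact ⟨_, Finset.mem_union_right _ (Finset.mem_image_of_mem _ hA), hx⟩

lemma exists_lt_mem_connHull_or (hT : IsTreeSpace T) :
    ∃ N : ℕ, ∀ (c : T) (y : ℕ → T), ∃ i j, i < j ∧ j ≤ N ∧
      (y i ∈ connHull c (y j) ∨ y j ∈ connHull c (y i)) := by
  obtain ⟨E, hE⟩ := hT.exists_finset_forall_mem_connHull
  refine ⟨E.card, fun c y => ?_⟩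
  choose e heE he using fun i => hE c (y i)
  obtain ⟨i, hi, j, hj, hij, heij⟩ := Finset.exists_ne_map_eq_of_card_lt_of_maps_to
    (s := Finset.range (E.card + 1)) (by simp) fun i _ => heE i
  rw [Finset.mem_range_succ_iff] at hi hj
  have hcomp := hT.mem_connHull_or (he i) (heij ▸ he j)
  rcases hij.lt_or_gt with hlt | hlt
  · exact ⟨i, j, hlt, hj, hcomp⟩
  · exact ⟨j, i, hlt, hi, hcomp.symm⟩

end IsTreeSpace

section Iterate

variable {α : Type*} {f : α → α} {A B : Set α} {x : α}

lemma image_iterate_image (f : α → α) (m n : ℕ) (B : Set α) :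
    f^[m] '' (f^[n] '' B) = f^[m + n] '' B := by
  rw [← image_comp, ← Function.iterate_add]

lemma subset_image_iterate (h : A ⊆ f '' A) (k : ℕ) : A ⊆ f^[k] '' A := by
  induction k with
  | zero => simp
  | succ k ih =>
    rw [Function.iterate_succ, image_comp]
    exact ih.trans (image_mono h)

lemma mem_image_iterate_of_isFixedPt (hx : Function.IsFixedPt f x) (hxB : x ∈ B) (n : ℕ) :
    x ∈ f^[n] '' B :=
  ⟨x, hxB, hx.iterate n⟩

end Iterate

section Hausdorff

lemma tendsto_hausdorffDist_zero {X : Type*} [PseudoMetricSpace X] {ι : Type*} {l : Filter ι}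
    {Y : ι → Set X} {L : Set X}
    (hY : ∀ ε > 0, ∀ᶠ i in l, Y i ⊆ thickening ε L)
    (hL : ∀ ε > 0, ∀ᶠ i in l, L ⊆ thickening ε (Y i)) :
    Tendsto (fun i => hausdorffDist (Y i) L) l (𝓝 0) := by
  refine Metric.tendsto_nhds.2 fun ε hε => ?_
  filter_upwards [hY (ε / 2) (half_pos hε), hL (ε / 2) (half_pos hε)] with i hYi hLi
  rw [Real.dist_0_eq_abs, abs_of_nonneg hausdorffDist_nonneg]
  refine (hausdorffDist_le_of_mem_dist (half_pos hε).le (fun y hy => ?_) fun z hz => ?_).trans_lt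
    (half_lt_self hε)
  · obtain ⟨z, hz, hyz⟩ := mem_thickening_iff.1 (hYi hy)
    exact ⟨z, hz, hyz.le⟩
  · obtain ⟨y, hy, hzy⟩ := mem_thickening_iff.1 (hLi hz)
    exact ⟨y, hy, hzy.le⟩

lemma subset_iInter_union_iInter {α : Type*} {Y : ℕ → Set α}
    (hY : ∀ m, ∀ z ∈ Y (m + 1), z ∈ Y m ∨ ∀ k ≥ m + 1, z ∈ Y k) (m : ℕ) :
    Y m ⊆ (⋂ k ≥ m, Y k) ∪ ⋂ j ≤ m, Y j := by
  induction m with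
  | zero => exact fun z hz => Or.inr (by simpa using hz)
  | succ m ih =>
    intro z hz
    rcases hY m z hz with hzm | hzk
    · refine (ih hzm).imp (fun h => ?_) fun h => ?_
      · simp only [mem_iInter] at h ⊢
        exact fun k hk => h k (m.le_succ.trans hk)
      · simp only [mem_iInter] at h ⊢
        intro j hj
        rcases hj.lt_or_eq with hlt | rfl
        exacts [h j (Nat.lt_succ_iff.1 hlt), hz]
    · exact Or.inl (mem_iInter₂.2 hzk)

lemma exists_tendsto_hausdorffDist {X : Type*} [MetricSpace X] [CompactSpace X] {Y : ℕ → Set X}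
    (hc : ∀ m, IsCompact (Y m)) (hne : ∀ m, (Y m).Nonempty)
    (hY : ∀ m, ∀ z ∈ Y (m + 1), z ∈ Y m ∨ ∀ k ≥ m + 1, z ∈ Y k) :
    ∃ L : Set X, L.Nonempty ∧ IsCompact L ∧
      Tendsto (fun m => hausdorffDist (Y m) L) atTop (𝓝 0) := by
  -- `U m` collects the points that persist from time `m` on, `D m` those present so far.
  set U : ℕ → Set X := fun m => ⋂ k ≥ m, Y k with hU
  set D : ℕ → Set X := fun m => ⋂ j ≤ m, Y j with hD
  have hYUD : ∀ m, Y m ⊆ U m ∪ D m := subset_iInter_union_iInter hY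
  have hUmono : Monotone U := fun m n hmn =>
    biInter_subset_biInter_left fun k (hk : n ≤ k) => hmn.trans hk
  have hDanti : Antitone D := fun m n hmn =>
    biInter_subset_biInter_left fun j (hj : j ≤ m) => hj.trans hmn
  have hDclosed : ∀ m, IsClosed (D m) := fun m =>
    isClosed_biInter fun j _ => (hc j).isClosed
  have hDU : ⋂ m, D m ⊆ U 0 := fun z hz => by
    simp only [hU, hD, mem_iInter] at hz ⊢
    exact fun k _ => hz k k le_rfl
  have hUL : ∀ m, U m ⊆ closure (⋃ m, U m) := fun m => (subset_iUnion U m).trans subset_closure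
  refine ⟨closure (⋃ m, U m), ?_, isClosed_closure.isCompact,
    tendsto_hausdorffDist_zero (fun ε hε => ?_) fun ε hε => ?_⟩
  · by_contra hempty
    have hUempty : ∀ m, U m = ∅ := fun m =>
      subset_empty_iff.1 ((hUL m).trans (not_nonempty_iff_eq_empty.1 hempty).subset)
    obtain ⟨z, hz⟩ := IsCompact.nonempty_iInter_of_directed_nonempty_isCompact_isClosed D
      hDanti.directed_ge (fun m => (hne m).mono (by simpa [hUempty] using hYUD m))
      (fun m => (hDclosed m).isCompact) hDclosed
    exact (hUempty 0).subset (hDU hz)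
  · obtain ⟨m, hm⟩ := exists_subset_nhds_of_isCompact
      hDanti.directed_ge (fun m => (hDclosed m).isCompact) fun z hz => isOpen_thickening.mem_nhds
        (self_subset_thickening hε _ (hUL 0 (hDU hz)))
    filter_upwards [eventually_ge_atTop m] with n hn
    exact (hYUD n).trans (union_subset ((hUL n).trans (self_subset_thickening hε _))
      ((hDanti hn).trans hm))
  · obtain ⟨m, hm⟩ := isClosed_closure.isCompact.elim_directed_cover
      (fun m => thickening ε (U m)) (fun m => isOpen_thickening)
      ((closure_subset_thickening hε _).trans (by rw [thickening_iUnion]))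
      (Monotone.directed_le fun _ _ h => thickening_subset_of_subset ε (hUmono h))
    filter_upwards [eventually_ge_atTop m] with n hn
    exact hm.trans (thickening_subset_of_subset ε ((hUmono hn).trans (iInter₂_subset n le_rfl)))

end Hausdorff

section FixedPoint

variable {T : Type*} [TopologicalSpace T] {f : T → T} {B : Set T} {b c : T}

lemma connHull_subset_image_iterate (hf : Continuous f) (hB : IsPreconnected B) (hc : f c = c)
    (hcB : c ∈ B) {x : T} {n : ℕ} (hx : x ∈ f^[n] '' B) : connHull c x ⊆ f^[n] '' B :=
  connHull_subset (hB.image _ (hf.iterate n).continuousOn) (mem_image_iterate_of_isFixedPt hc hcB n)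
    hx

lemma exists_mem_image_iterate_of_backward (hf : Continuous f) (hB : IsPreconnected B)
    (hc : f c = c) (hcB : c ∈ B) (hb : b ∈ B) {p W : ℕ} {s : ℕ → ℕ} (S : Finset ℕ)
    (hs : ∀ q ∈ S, q * W ≤ s q ∧ s q + p ≤ (q + 1) * W)
    (hloop : ∀ q ∈ S, f^[s q + p] b ∈ connHull c (f^[s q] b)) {n : ℕ}
    (hn : ∀ q ∈ S, (q + 1) * W ≤ n) : ∃ i, i + p * S.card = n ∧ f^[n] b ∈ f^[i] '' B := by
  induction S using Finset.induction_on_max generalizing n with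
  | empty => exact ⟨n, by simp, mem_image_of_mem _ hb⟩
  | insert q S hlt ih =>
    rw [Finset.forall_mem_insert] at hs hloop hn
    obtain ⟨i, hi, hmem⟩ := ih hs.2 hloop.2 (n := s q) fun q' hq' =>
      (Nat.mul_le_mul_right W (hlt q' hq')).trans hs.1.1
    obtain ⟨r, rfl⟩ := Nat.exists_eq_add_of_le' (hs.1.2.trans hn.1)
    refine ⟨r + i, ?_, ?_⟩
    · rw [Finset.card_insert_of_notMem fun hq => (hlt q hq).false, ← hi]
      ring
    · rw [Function.iterate_add_apply f r, ← image_iterate_image]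
      exact mem_image_of_mem _ (connHull_subset_image_iterate hf hB hc hcB hmem hloop.1)

end FixedPoint

namespace IsTreeSpace

section FixedPoint

variable {T : Type*} [MetricSpace T] {f : T → T} {B : Set T} {b c : T}

lemma connHull_map_subset (hT : IsTreeSpace T) (hf : Continuous f) (x y : T) :
    connHull (f x) (f y) ⊆ f '' connHull x y :=
  connHull_subset ((hT.isPreconnected_connHull x y).image f hf.continuousOn)
    (mem_image_of_mem f left_mem_connHull) (mem_image_of_mem f right_mem_connHull)

lemma mem_image_iterate_of_forward (hT : IsTreeSpace T) (hf : Continuous f)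
    (hB : IsPreconnected B) (hc : f c = c) (hcB : c ∈ B) (hb : b ∈ B) {s p n : ℕ}
    (hn : s + p ≤ n) (hloop : f^[s] b ∈ connHull c (f^[s + p] b)) (k : ℕ) :
    f^[n] b ∈ f^[n + p * k] '' B := by
  obtain ⟨r, rfl⟩ := Nat.exists_eq_add_of_le' hn
  have hself : connHull c (f^[s + p] b) ⊆ f^[p] '' connHull c (f^[s + p] b) := by
    have hmap := hT.connHull_map_subset (hf.iterate p) c (f^[s] b)
    rw [Function.iterate_fixed hc, ← Function.iterate_add_apply, add_comm p] at hmap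
    exact hmap.trans (image_mono (hT.connHull_subset_connHull left_mem_connHull hloop))
  have hmem : f^[s + p] b ∈ f^[p * k] '' (f^[s + p] '' B) := by
    rw [Function.iterate_mul]
    exact image_mono (connHull_subset_image_iterate hf hB hc hcB (mem_image_of_mem _ hb))
      (subset_image_iterate hself k right_mem_connHull)
  rw [Function.iterate_add_apply f r, add_assoc, ← image_iterate_image, add_comm (s + p),
    ← image_iterate_image]
  exact mem_image_of_mem _ hmem

lemma exists_forward_or_backward (hT : IsTreeSpace T) :
    ∃ N : ℕ, ∀ (f : T → T) (b c : T) (q : ℕ), ∃ s p, p ∈ Finset.Icc 1 N ∧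
      (q * N ≤ s ∧ s + p ≤ (q + 1) * N) ∧
        (f^[s] b ∈ connHull c (f^[s + p] b) ∨ f^[s + p] b ∈ connHull c (f^[s] b)) := by
  obtain ⟨N, hN⟩ := hT.exists_lt_mem_connHull_or
  refine ⟨N, fun f b c q => ?_⟩
  obtain ⟨i, j, hij, hj, hcomp⟩ := hN c fun i => f^[q * N + i] b
  obtain ⟨p, rfl⟩ := Nat.exists_eq_add_of_lt hij
  refine ⟨q * N + i, p + 1, Finset.mem_Icc.2 ⟨by omega, by omega⟩, ⟨by omega, ?_⟩, ?_⟩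
  · rw [add_mul]
    omega
  · simpa only [add_assoc] using hcomp

lemma exists_mem_image_iterate_or_forall (hT : IsTreeSpace T) (hf : Continuous f)
    (hB : IsPreconnected B) (hc : f c = c) (hcB : c ∈ B) :
    ∃ P M : ℕ, 1 ≤ P ∧ ∀ n ≥ M, ∀ z ∈ f^[n + P] '' B,
      z ∈ f^[n] '' B ∨ ∀ k, z ∈ f^[n + P + P * k] '' B := by
  obtain ⟨N, hN⟩ := hT.exists_forward_or_backward
  set P := N.factorial
  refine ⟨P, N * P * N, N.factorial_pos, ?_⟩
  rintro n hn _ ⟨b, hb, rfl⟩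
  choose s p hp hs hloop using hN f b c
  have hdvd : ∀ q, p q ∣ P := fun q =>
    Nat.dvd_factorial (Finset.mem_Icc.1 (hp q)).1 (Finset.mem_Icc.1 (hp q)).2
  have hwindow : ∀ q < N * P, (q + 1) * N ≤ n + P := fun q hq =>
    (Nat.mul_le_mul_right N hq).trans (hn.trans (n.le_add_right P))
  by_cases hfwd : ∃ q < N * P, f^[s q] b ∈ connHull c (f^[s q + p q] b)
  · obtain ⟨q, hq, hforward⟩ := hfwd
    obtain ⟨d, hd⟩ := hdvd q
    refine Or.inr fun k => ?_
    have := hT.mem_image_iterate_of_forward hf hB hc hcB hb ((hs q).2.trans (hwindow q hq))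
      hforward (d * k)
    rwa [← mul_assoc, ← hd] at this
  · push Not at hfwd
    have hbwd : ∀ q < N * P, f^[s q + p q] b ∈ connHull c (f^[s q] b) := fun q hq =>
      (hloop q).resolve_left (hfwd q hq)
    -- Some length `r ≤ N` occurs in `P` windows; cutting out `P / r` of these loops saves exactly
    -- `P` steps.
    obtain ⟨r, hr, hcard⟩ := Finset.exists_le_card_fiber_of_mul_le_card_of_maps_to
      (s := Finset.range (N * P)) (n := P) (fun q _ => hp q) ⟨p 0, hp 0⟩ (by simp)
    obtain ⟨S, hS, hScard⟩ := Finset.exists_subset_card_eq ((P.div_le_self r).trans hcard)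
    have hSr : ∀ q ∈ S, q < N * P ∧ p q = r := fun q hq => by simpa using hS hq
    obtain ⟨i, hi, hmem⟩ := exists_mem_image_iterate_of_backward hf hB hc hcB hb S
      (fun q hq => (hSr q hq).2 ▸ hs q) (fun q hq => (hSr q hq).2 ▸ hbwd q (hSr q hq).1)
      fun q hq => hwindow q (hSr q hq).1
    rw [hScard, Nat.mul_div_cancel' (Nat.dvd_factorial (Finset.mem_Icc.1 hr).1
      (Finset.mem_Icc.1 hr).2), add_left_inj] at hi
    exact Or.inl (hi ▸ hmem)

lemma exists_tendsto_hausdorffDist_of_isFixedPt (hT : IsTreeSpace T) (hf : Continuous f)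
    (hB : IsCompact B) (hBc : IsPreconnected B) (hc : f c = c) (hcB : c ∈ B) :
    ∃ P : ℕ, 1 ≤ P ∧ ∀ r, ∃ L : Set T, L.Nonempty ∧ IsCompact L ∧
      Tendsto (fun n => hausdorffDist (f^[r + P * n] '' B) L) atTop (𝓝 0) := by
  have := hT.compact
  obtain ⟨P, M, hP, hPM⟩ := hT.exists_mem_image_iterate_or_forall hf hBc hc hcB
  refine ⟨P, hP, fun r => ?_⟩
  obtain ⟨L, hne, hL, hlim⟩ := exists_tendsto_hausdorffDist
    (Y := fun m => f^[r + P * (m + M)] '' B) (fun m => hB.image (hf.iterate _))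
    (fun m => ⟨c, mem_image_iterate_of_isFixedPt hc hcB _⟩) fun m z hz => by
      have hM : M ≤ r + P * (m + M) :=
        ((Nat.le_add_left M m).trans (Nat.le_mul_of_pos_left _ hP)).trans (Nat.le_add_left _ _)
      rw [show r + P * (m + 1 + M) = r + P * (m + M) + P by ring] at hz
      refine (hPM _ hM z hz).imp_right fun h k hk => ?_
      obtain ⟨l, rfl⟩ := Nat.exists_eq_add_of_le hk
      convert h l using 3
      ring
  exact ⟨L, hne, hL, (tendsto_add_atTop_iff_nat M).1 hlim⟩

lemma asympPeriodic_of_mem_periodicPts (hT : IsTreeSpace T) (hf : Continuous f) {A : Set T}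
    (hA : IsCompact A) (hAc : IsPreconnected A) {n : ℕ} (hcA : c ∈ f^[n] '' A)
    (hc : c ∈ Function.periodicPts f) : AsympPeriodic f A := by
  obtain ⟨q, hq, hqc⟩ := hc
  obtain ⟨d, hd⟩ := Nat.exists_eq_add_of_le' (Nat.le_mul_of_pos_left n hq)
  have hfix : f^[q] (f^[d] c) = f^[d] c := hqc.apply_iterate d
  have hmem : f^[d] c ∈ f^[q * n] '' A := by
    rw [hd, ← image_iterate_image]
    exact mem_image_of_mem _ hcA
  obtain ⟨P, hP, hlim⟩ := hT.exists_tendsto_hausdorffDist_of_isFixedPt (hf.iterate q)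
    (hA.image (hf.iterate (q * n))) (hAc.image _ (hf.iterate (q * n)).continuousOn) hfix hmem
  obtain ⟨r, hr⟩ := Nat.exists_eq_add_of_le' (Nat.le_mul_of_pos_left n hP)
  obtain ⟨L, hne, hL, hlim⟩ := hlim r
  refine ⟨q * P, Nat.mul_pos hq hP, L, hne, hL,
    (tendsto_add_atTop_iff_nat n).1 (hlim.congr fun m => ?_)⟩
  have hexp : q * (r + P * m) + q * n = q * P * (m + n) := by
    rw [mul_assoc, mul_add P, hr]
    ring
  rw [← Function.iterate_mul, image_iterate_image, hexp]

end FixedPoint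

end IsTreeSpace

lemma eventually_image_iterate_subset {α : Type*} [TopologicalSpace α] {g : α → α}
    (hg : Continuous g) {X U K : Set α} (hgX : MapsTo g X X) (hU : IsOpen U)
    (hgU : MapsTo g (X ∩ U) U) (hK : IsCompact K) (hKX : K ⊆ X)
    (hreach : ∀ x ∈ X, ∃ n, g^[n] x ∈ U) : ∀ᶠ n in atTop, g^[n] '' K ⊆ X ∩ U := by
  have hstay : MapsTo g (X ∩ U) (X ∩ U) := fun x hx => ⟨hgX hx.1, hgU hx⟩
  obtain ⟨s, hs⟩ := hK.elim_finite_subcover (fun n => g^[n] ⁻¹' U)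
    (fun n => hU.preimage (hg.iterate n)) fun x hx => mem_iUnion.2 (hreach x (hKX hx))
  filter_upwards [eventually_ge_atTop (s.sup id)] with n hn
  rintro _ ⟨x, hx, rfl⟩
  obtain ⟨i, hi, hix⟩ := mem_iUnion₂.1 (hs hx)
  rw [← Nat.sub_add_cancel ((Finset.le_sup (f := id) hi).trans hn), Function.iterate_add_apply]
  exact hstay.iterate _ ⟨hgX.iterate i (hKX hx), hix⟩

lemma tendsto_diam_smallSets {α : Type*} [PseudoMetricSpace α] (x : α) :
    Tendsto diam (𝓝 x).smallSets (𝓝 0) := by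
  refine Metric.tendsto_nhds.2 fun ε hε => eventually_smallSets.2
    ⟨closedBall x (ε / 3), closedBall_mem_nhds x (by positivity), fun s hs => ?_⟩
  rw [Real.dist_0_eq_abs, abs_of_nonneg diam_nonneg]
  linarith [diam_le_of_subset_closedBall (by positivity) hs]

lemma tendsto_of_tendsto_add_mul {α : Type*} {u : ℕ → α} {l : Filter α} {q : ℕ} (hq : 0 < q)
    (h : ∀ r < q, Tendsto (fun n => u (r + q * n)) atTop l) : Tendsto u atTop l := by
  refine tendsto_iff_forall_eventually_mem.2 fun s hs => ?_
  have hall : ∀ᶠ n in atTop, ∀ r ∈ Finset.range q, u (r + q * n) ∈ s :=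
    (Finset.eventually_all _).2 fun r hr => h r (Finset.mem_range.1 hr) hs
  filter_upwards [(Nat.tendsto_div_const_atTop hq.ne').eventually hall] with n hn
  simpa only [Nat.mod_add_div] using hn (n % q) (Finset.mem_range.2 (n.mod_lt hq))

lemma tendsto_diam_image_iterate {α : Type*} [PseudoMetricSpace α] {f : α → α}
    (hf : Continuous f) {A : Set α} {q m : ℕ} (hq : 0 < q) {c : α}
    (hc : Tendsto (fun n => (f^[q])^[n] '' (f^[m] '' A)) atTop (𝓝 c).smallSets) :
    Tendsto (fun n => diam (f^[n] '' A)) atTop (𝓝 0) := by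
  refine (tendsto_add_atTop_iff_nat m).1 (tendsto_of_tendsto_add_mul hq fun r _ => ?_)
  refine ((tendsto_diam_smallSets (f^[r] c)).comp
    (((hf.iterate r).tendsto c).image_smallSets.comp hc)).congr fun n => ?_
  rw [Function.comp_apply, Function.comp_apply, ← Function.iterate_mul, image_iterate_image,
    image_iterate_image, add_assoc]

lemma exists_maximal_of_isCompact {X : Type*} [TopologicalSpace X] {r : X → X → Prop}
    (hrefl : ∀ x, r x x) (htrans : ∀ {x y z}, r x y → r y z → r x z)
    (hclosed : ∀ x, IsClosed {y | r x y}) {K : Set X} (hK : IsCompact K) (hne : K.Nonempty) :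
    ∃ m ∈ K, ∀ y ∈ K, r m y → r y m := by
  have := hne.to_subtype
  have hchain : ∀ C : Set K, IsChain (fun x y : K => r x y) C → C.Nonempty →
      ∃ ub : K, ∀ x ∈ C, r x ub := by
    intro C hC hCne
    have := hCne.to_subtype
    have hdir : Directed (· ⊇ ·) fun x : C => {y | r (x : K) y} := fun x y => by
      have : Std.Refl fun x y : K => r x y := ⟨fun x => hrefl x⟩
      rcases hC.total x.2 y.2 with hxy | hyx
      exacts [⟨y, fun _ => htrans hxy, subset_rfl⟩, ⟨x, subset_rfl, fun _ => htrans hyx⟩]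
    by_contra! hub
    obtain ⟨x, hx⟩ := hK.elim_directed_family_closed
      (fun x : C => {y | r (x : K) y}) (fun x => hclosed _)
      (eq_empty_iff_forall_notMem.2 fun y hy => by
        obtain ⟨x, hx, hxy⟩ := hub ⟨y, hy.1⟩
        exact hxy (mem_iInter.1 hy.2 ⟨x, hx⟩)) hdir
    exact hx.subset ⟨x.1.2, hrefl _⟩
  obtain ⟨m, hm⟩ := exists_maximal_of_nonempty_chains_bounded hchain htrans
  exact ⟨m, m.2, fun y hy => hm ⟨y, hy⟩⟩

namespace IsTreeSpace

section NoPeriodic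

variable {T : Type*} [MetricSpace T] {g : T → T} {X K : Set T} {a c : T}

lemma exists_maximal_connHull (hT : IsTreeSpace T) (a : T) (hK : IsCompact K)
    (hne : K.Nonempty) : ∃ m ∈ K, ∀ y ∈ K, m ∈ connHull a y → y = m := by
  obtain ⟨m, hm, hmax⟩ := exists_maximal_of_isCompact (r := fun x y => x ∈ connHull a y)
    (fun _ => right_mem_connHull) hT.mem_connHull_trans_left
    (fun x => ⟨hT.isOpen_notMem_connHull a x⟩) hK hne
  exact ⟨m, hm, fun y hy hmy => hT.mem_connHull_antisymm (hmax y hy hmy) hmy⟩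

lemma exists_first_connHull (hT : IsTreeSpace T) (hK : IsClosed K) {x : T} (hx : x ∈ K) (c : T) :
    ∃ b ∈ K, b ∈ connHull c x ∧ ∀ v ∈ K, v ∈ connHull c b → v = b := by
  obtain ⟨b, ⟨hbx, hbK⟩, hb⟩ := hT.exists_maximal_connHull x
    ((hT.isCompact_connHull c x).inter_right hK) ⟨x, right_mem_connHull, hx⟩
  refine ⟨b, hbK, hbx, fun v hv hvb => hb v ⟨hT.mem_connHull_trans_left hvb hbx, hv⟩ ?_⟩
  rw [connHull_comm]
  exact hT.mem_connHull_trans_left_right hbx hvb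

lemma exists_isFixedPt_mem_closure (hT : IsTreeSpace T) (hg : Continuous g)
    (hX : IsPreconnected X) (hgX : MapsTo g X X) (hfix : ∀ x ∈ X, g x ≠ x) (ha : a ∈ X) :
    ∃ c, g c = c ∧ c ∉ X ∧ c ∈ closure {x ∈ X | x ∈ connHull a (g x)} := by
  have := hT.compact
  have hclosed : IsClosed {x | x ∈ connHull a (g x)} :=
    (hT.isClosed_mem_connHull a).preimage (continuous_id.prodMk hg)
  obtain ⟨c, hc, hmax⟩ := hT.exists_maximal_connHull a
    (isClosed_closure (s := {x ∈ X | x ∈ connHull a (g x)})).isCompact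
    ⟨a, subset_closure ⟨ha, left_mem_connHull⟩⟩
  have hac : c ∈ connHull a (g c) := closure_minimal (fun x hx => hx.2) hclosed hc
  -- If `c ∈ X`, a point of `X` slightly beyond `c` is still moved away from `a`, so `c` is not
  -- maximal.
  have hcX : c ∉ X := by
    intro hcX
    obtain ⟨m, hm, hmc, hmg⟩ := hT.exists_mem_connHull_ne (hfix c hcX).symm
    have ham : m ∈ connHull a (g c) := hT.connHull_subset_connHull hac right_mem_connHull hm
    have hcm : c ∈ connHull a m := hT.mem_connHull_trans_right_left hac hm
    obtain ⟨x, ⟨⟨hx, hmx⟩, hmgx⟩, hxc⟩ := ((((hT.frequently_mem_connHull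
      (hfix c hcX).symm).and_eventually (nhdsWithin_le_nhds
      (hT.eventually_notMem_connHull hmc.symm))).and_eventually (nhdsWithin_le_nhds
      (hg.continuousAt ((hT.isOpen_mem_connHull_ne a m).mem_nhds ⟨ham, hmg.symm⟩)))).and_eventually
      self_mem_nhdsWithin).exists
    have hxm : x ∈ connHull a m := hT.connHull_subset_connHull hcm right_mem_connHull
      ((hT.mem_connHull_or hx hm).resolve_right hmx)
    exact hxc (hmax x (subset_closure ⟨connHull_subset hX hcX (hgX hcX) hx,
      hT.mem_connHull_trans_left hxm hmgx.1⟩) (hT.mem_connHull_trans_right_left hac hx))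
  have hcX' : c ∈ closure X := closure_mono (fun x hx => hx.1) hc
  rw [connHull_comm] at hac
  exact ⟨c, ((connHull_subset_insert hX ha (map_mem_closure hg hcX' hgX) hac).resolve_right
    hcX).symm, hcX, hc⟩

lemma eventually_forall_mem_connHull (hT : IsTreeSpace T) (hX : IsPreconnected X) (ha : a ∈ X)
    (hc : c ∉ X) : ∀ᶠ w in 𝓝 c, ∀ x ∈ X, w ∈ connHull a x → x ∈ connHull a c := by
  obtain ⟨E, hE⟩ := hT.exists_finset_forall_mem_connHull
  have hend : ∀ᶠ w in 𝓝 c, ∀ e ∈ E, c ∈ connHull a e ∨ w ∉ connHull a e :=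
    (Finset.eventually_all E).2 fun e _ => by
      by_cases hce : c ∈ connHull a e
      · exact Eventually.of_forall fun _ => Or.inl hce
      · exact ((hT.isCompact_connHull a e).isClosed.isOpen_compl.eventually_mem hce).mono
          fun _ => Or.inr
  filter_upwards [hend] with w hw x hx hwx
  obtain ⟨e, he, hxe⟩ := hE a x
  rcases hw e he with hce | hwe
  · exact (hT.mem_connHull_or hxe hce).resolve_right fun hcx => hc (connHull_subset hX ha hx hcx)
  · exact absurd (hT.mem_connHull_trans_left hwx hxe) hwe

lemma forall_mem_connHull_map (hT : IsTreeSpace T) (hg : Continuous g) {I : Set T}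
    (hI : IsPreconnected I) (hIc : I ⊆ connHull a c) (hfix : ∀ x ∈ I, g x ≠ x)
    (hgI : ∀ x ∈ I, x ∈ connHull a (g x) → g x ∈ connHull a c) {x₁ : T} (hx₁ : x₁ ∈ I)
    (hgx₁ : x₁ ∈ connHull a (g x₁)) : ∀ x ∈ I, x ∈ connHull a (g x) := by
  -- On `I` the condition `x ∈ connHull a (g x)` is closed. It is also open there: since `x ≠ g x`,
  -- some `m` lies strictly between them, and `m` still separates nearby points from their images.
  set V : Set T :=
    ⋃ m ∈ connHull a c, {x | m ∉ connHull a x} ∩ g ⁻¹' {y | m ∈ connHull a y ∧ y ≠ m}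
  have hVopen : IsOpen V := isOpen_biUnion fun m _ =>
    (hT.isOpen_notMem_connHull a m).inter ((hT.isOpen_mem_connHull_ne a m).preimage hg)
  have hWopen : IsOpen {x | x ∉ connHull a (g x)} :=
    ((hT.isClosed_mem_connHull a).preimage (continuous_id.prodMk hg)).isOpen_compl
  have hadv : ∀ x ∈ I, x ∈ connHull a (g x) → x ∈ V := by
    intro x hx hgx
    obtain ⟨m, hm, hmx, hmg⟩ := hT.exists_mem_connHull_ne (hfix x hx).symm
    have ham : m ∈ connHull a (g x) := hT.connHull_subset_connHull hgx right_mem_connHull hm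
    exact mem_biUnion (hT.mem_connHull_trans_left ham (hgI x hx hgx))
      ⟨fun hmx' => hmx (hT.eq_of_mem_connHull hgx hmx' hm), ham, hmg.symm⟩
  by_contra! hback
  obtain ⟨x, hx, hxg⟩ := hback
  obtain ⟨z, hz, hzV, hzW⟩ := hI V {x | x ∉ connHull a (g x)} hVopen hWopen
    (fun z hz => or_iff_not_imp_right.2 fun h => hadv z hz (not_not.1 h))
    ⟨x₁, hx₁, hadv x₁ hx₁ hgx₁⟩ ⟨x, hx, hxg⟩
  obtain ⟨m, hm, hmz, hmg⟩ := mem_iUnion₂.1 hzV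
  exact hzW (hT.mem_connHull_trans_left
    ((hT.mem_connHull_or (hIc hz) hm).resolve_right hmz) hmg.1)

lemma exists_trap (hT : IsTreeSpace T) (hg : Continuous g) (hX : IsPreconnected X)
    (hgX : MapsTo g X X) (hfix : ∀ x ∈ X, g x ≠ x) (ha : a ∈ X) (hc : c ∉ X)
    (hcl : c ∈ closure {x ∈ X | x ∈ connHull a (g x)}) {V : Set T} (hV : V ∈ 𝓝 c) :
    ∃ U, IsOpen U ∧ c ∈ U ∧ MapsTo g (X ∩ U) U ∧ X ∩ U ⊆ V := by
  have hca : c ≠ a := fun h => hc (h ▸ ha)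
  obtain ⟨w, ⟨⟨hw, hend⟩, hwV⟩, hwc⟩ := ((((hT.frequently_mem_connHull hca).and_eventually
    (nhdsWithin_le_nhds (hT.eventually_forall_mem_connHull hX ha hc))).and_eventually
    (nhdsWithin_le_nhds (hT.eventually_connHull_subset hV))).and_eventually
    self_mem_nhdsWithin).exists
  rw [connHull_comm] at hw
  have hU : IsOpen {x | w ∈ connHull a x ∧ x ≠ w} := hT.isOpen_mem_connHull_ne a w
  obtain ⟨x₁, ⟨hwx₁, -⟩, hx₁, hgx₁⟩ := mem_closure_iff.1 hcl _ hU ⟨hw, Ne.symm hwc⟩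
  have hadv : ∀ x ∈ X, w ∈ connHull a x → x ∈ connHull a (g x) := by
    intro x hx hwx
    have hIX : connHull x x₁ ⊆ X := connHull_subset hX hx hx₁
    have hIw : ∀ z ∈ connHull x x₁, w ∈ connHull a z := fun z hz => by
      rcases hT.connHull_subset_union x x₁ w hz with h | h
      · exact hT.mem_connHull_trans_right_left hwx (connHull_comm x w ▸ h)
      · exact hT.mem_connHull_trans_right_left hwx₁ h
    exact hT.forall_mem_connHull_map hg (hT.isPreconnected_connHull x x₁)
      (fun z hz => hend z (hIX hz) (hIw z hz)) (fun z hz => hfix z (hIX hz))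
      (fun z hz hgz => hend _ (hgX (hIX hz)) (hT.mem_connHull_trans_left (hIw z hz) hgz))
      right_mem_connHull hgx₁ x left_mem_connHull
  refine ⟨_, hU, ⟨hw, Ne.symm hwc⟩, ?_, ?_⟩
  · rintro x ⟨hx, hwx, hne⟩
    refine ⟨hT.mem_connHull_trans_left hwx (hadv x hx hwx), fun hgx => hne ?_⟩
    exact hT.mem_connHull_antisymm (hgx ▸ hadv x hx hwx) hwx
  · rintro x ⟨hx, hwx, -⟩
    apply hwV
    rw [connHull_comm]
    exact hT.mem_connHull_trans_left_right (hend x hx hwx) hwx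

lemma exists_iterate_mem (hT : IsTreeSpace T) (hg : Continuous g) (hX : IsPreconnected X)
    (hgX : MapsTo g X X) (hper : ∀ x ∈ X, x ∉ Function.periodicPts g) (hgc : g c = c)
    (hcX : c ∉ X) (hcl : c ∈ closure X) {U : Set T} (hU : IsOpen U) (hcU : c ∈ U)
    (hgU : MapsTo g (X ∩ U) U) {x : T} (hx : x ∈ X) : ∃ n, g^[n] x ∈ U := by
  by_contra! hxU
  -- Let `b` be the first point on the way from `c` to `x` whose orbit never enters `U`. If
  -- `g^[s] b` is between `c` and `g^[t] b`, it is the image under `g^[t]` of some `v` between `c`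
  -- and `b`; the orbit of `v` never enters `U` either, so `v = b`.
  set G : Set T := ⋂ n, g^[n] ⁻¹' Uᶜ
  have hGclosed : IsClosed G := isClosed_iInter fun n => hU.isClosed_compl.preimage (hg.iterate n)
  obtain ⟨b, hbG, hbx, hb⟩ := hT.exists_first_connHull hGclosed (mem_iInter.2 hxU) c
  have hbX : b ∈ X := (connHull_subset_insert hX hx hcl hbx).resolve_left fun hbc =>
    mem_iInter.1 hbG 0 (hbc ▸ hcU)
  have hstay : MapsTo g (X ∩ U) (X ∩ U) := fun y hy => ⟨hgX hy.1, hgU hy⟩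
  have hinj : ∀ s t, g^[s] b ∈ connHull c (g^[t] b) → g^[s] b = g^[t] b := by
    intro s t hst
    have hmap := hT.connHull_map_subset (hg.iterate t) c b
    rw [Function.iterate_fixed hgc] at hmap
    obtain ⟨v, hv, hvs⟩ := hmap hst
    have hvX : v ∈ X := (connHull_subset_insert hX hbX hcl hv).resolve_left fun hvc => by
      rw [hvc, Function.iterate_fixed hgc] at hvs
      exact hcX (hvs ▸ hgX.iterate s hbX)
    have hvG : v ∈ G := mem_iInter.2 fun n hn => mem_iInter.1 hbG (n + s) <| by
      rw [Function.iterate_add_apply, ← hvs, ← Function.iterate_add_apply, add_comm,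
        Function.iterate_add_apply]
      exact (hstay.iterate t ⟨hgX.iterate n hvX, hn⟩).2
    rw [← hvs, hb v hvG hv]
  obtain ⟨N, hN⟩ := hT.exists_lt_mem_connHull_or
  obtain ⟨i, j, hij, -, hcomp⟩ := hN c fun i => g^[i] b
  have heq : g^[i] b = g^[j] b := hcomp.elim (hinj i j) fun h => (hinj j i h).symm
  refine hper _ (hgX.iterate i hbX) (Function.mk_mem_periodicPts (Nat.sub_pos_of_lt hij) ?_)
  rw [Function.IsPeriodicPt, Function.IsFixedPt, ← Function.iterate_add_apply,
    Nat.sub_add_cancel hij.le, heq]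

lemma tendsto_smallSets_of_inter_nonempty (hT : IsTreeSpace T) (hg : Continuous g)
    (hK : IsCompact K) (hKc : IsConnected K) (hint : (K ∩ g '' K).Nonempty)
    (hper : ∀ n, ∀ x ∈ g^[n] '' K, x ∉ Function.periodicPts g) :
    ∃ c, Tendsto (fun n => g^[n] '' K) atTop (𝓝 c).smallSets := by
  set X : Set T := ⋃ n, g^[n] '' K
  have hX : IsPreconnected X := by
    refine IsPreconnected.iUnion_of_chain
      (fun n => hKc.isPreconnected.image _ (hg.iterate n).continuousOn) fun n => ?_
    obtain ⟨w, hw, hgw⟩ := hint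
    rw [Nat.succ_eq_succ, Function.iterate_succ, image_comp]
    exact ⟨g^[n] w, mem_image_of_mem _ hw, mem_image_of_mem _ hgw⟩
  have hgX : MapsTo g X X := by
    intro x hx
    obtain ⟨n, y, hy, rfl⟩ := mem_iUnion.1 hx
    exact mem_iUnion.2 ⟨n + 1, y, hy, Function.iterate_succ_apply' g n y⟩
  have hKX : K ⊆ X := fun x hx => mem_iUnion.2 ⟨0, x, hx, rfl⟩
  have hperX : ∀ x ∈ X, x ∉ Function.periodicPts g := fun x hx => by
    obtain ⟨n, hn⟩ := mem_iUnion.1 hx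
    exact hper n x hn
  have hfix : ∀ x ∈ X, g x ≠ x := fun x hx h =>
    hperX x hx (Function.mk_mem_periodicPts one_pos h)
  obtain ⟨a, ha⟩ := hKc.nonempty
  obtain ⟨c, hgc, hcX, hcl⟩ := hT.exists_isFixedPt_mem_closure hg hX hgX hfix (hKX ha)
  refine ⟨c, tendsto_smallSets_iff.2 fun V hV => ?_⟩
  obtain ⟨U, hU, hcU, hgU, hUV⟩ := hT.exists_trap hg hX hgX hfix (hKX ha) hcX hcl hV
  have hreach : ∀ x ∈ X, ∃ n, g^[n] x ∈ U := fun x => hT.exists_iterate_mem hg hX hgX hperX hgc hcX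
    (closure_mono (fun x hx => hx.1) hcl) hU hcU hgU
  filter_upwards [eventually_image_iterate_subset hg hgX hU hgU hK hKX hreach] with n hn
  exact hn.trans hUV

end NoPeriodic

section Degenerate

variable {T : Type*} [MetricSpace T]

lemma eventually_mem_connHull (hT : IsTreeSpace T) {a b z : T} (hz : z ∈ connHull a b)
    (hza : z ≠ a) (hzb : z ≠ b) : ∀ᶠ p : T × T in 𝓝 (a, b), z ∈ connHull p.1 p.2 := by
  filter_upwards [(hT.eventually_notMem_connHull hza.symm).prod_nhds
    (hT.eventually_notMem_connHull hzb.symm)] with p hp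
  have hzp := (hT.connHull_subset_union a b p.1 hz).resolve_left hp.1
  rw [connHull_comm] at hzp
  have := (hT.connHull_subset_union b p.1 p.2 hzp).resolve_left hp.2
  rwa [connHull_comm]

lemma exists_frequently_mem (hT : IsTreeSpace T) {X : ℕ → Set T} (hX : ∀ n, IsPreconnected (X n))
    (hdiam : ¬ Tendsto (fun n => diam (X n)) atTop (𝓝 0)) : ∃ z, ∃ᶠ n in atTop, z ∈ X n := by
  have := hT.compact
  obtain ⟨ε, hε, hfreq⟩ : ∃ ε > 0, ∃ᶠ n in atTop, ε < diam (X n) := by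
    by_contra! hsmall
    refine hdiam (Metric.tendsto_nhds.2 fun ε hε => ?_)
    filter_upwards [hsmall (ε / 2) (half_pos hε)] with n hn
    rw [Real.dist_0_eq_abs, abs_of_nonneg diam_nonneg]
    exact hn.trans_lt (half_lt_self hε)
  obtain ⟨φ, hφ, hφε⟩ := extraction_of_frequently_atTop hfreq
  have hpair : ∀ k, ∃ p : T × T, (p.1 ∈ X (φ k) ∧ p.2 ∈ X (φ k)) ∧ ε ≤ dist p.1 p.2 := by
    intro k
    by_contra! hclose
    exact (hφε k).not_ge (diam_le_of_forall_dist_le hε.le fun x hx y hy =>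
      (hclose (x, y) ⟨hx, hy⟩).le)
  choose p hp hpε using hpair
  obtain ⟨⟨a, b⟩, hab, hcluster⟩ := (isClosed_le continuous_const continuous_dist :
    IsClosed {p : T × T | ε ≤ dist p.1 p.2}).isCompact.exists_mapClusterPt
      (f := atTop) (u := p) (tendsto_principal.2 (Eventually.of_forall hpε))
  obtain ⟨z, hz, hza, hzb⟩ := hT.exists_mem_connHull_ne (dist_pos.1 (hε.trans_le hab))
  refine ⟨z, hφ.tendsto_atTop.frequently ?_⟩
  exact (hcluster.frequently (hT.eventually_mem_connHull hz hza hzb)).mono fun k hk =>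
    connHull_subset (hX _) (hp k).1 (hp k).2 hk

lemma tendsto_diam_of_notMem_periodicPts (hT : IsTreeSpace T) {f : T → T} (hf : Continuous f)
    {A : Set T} (hA : IsCompact A) (hAc : IsConnected A)
    (hper : ∀ n, ∀ x ∈ f^[n] '' A, x ∉ Function.periodicPts f) :
    Tendsto (fun n => diam (f^[n] '' A)) atTop (𝓝 0) := by
  by_contra hdiam
  obtain ⟨w, hw⟩ := hT.exists_frequently_mem
    (fun n => hAc.isPreconnected.image _ (hf.iterate n).continuousOn) hdiam
  obtain ⟨m, -, hm⟩ := frequently_atTop.1 hw 0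
  obtain ⟨n, hmn, hn⟩ := frequently_atTop.1 hw (m + 1)
  obtain ⟨d, rfl⟩ := Nat.exists_eq_add_of_lt hmn
  have hint : (f^[m] '' A ∩ f^[d + 1] '' (f^[m] '' A)).Nonempty := by
    rw [image_iterate_image, add_comm (d + 1)]
    exact ⟨w, hm, hn⟩
  have hper' : ∀ n, ∀ x ∈ (f^[d + 1])^[n] '' (f^[m] '' A), x ∉ Function.periodicPts f^[d + 1] := by
    rintro n x hx ⟨k, hk, hxk⟩
    rw [← Function.iterate_mul, image_iterate_image] at hx
    refine hper _ x hx (Function.mk_mem_periodicPts (Nat.mul_pos d.succ_pos hk) ?_)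
    rwa [Function.IsPeriodicPt, Function.iterate_mul]
  obtain ⟨c, hc⟩ := hT.tendsto_smallSets_of_inter_nonempty (hf.iterate (d + 1))
    (hA.image (hf.iterate m)) (hAc.image _ (hf.iterate m).continuousOn) hint hper'
  exact hdiam (tendsto_diam_image_iterate hf d.succ_pos hc)

end Degenerate

end IsTreeSpace

/-- every subcontinuum of a tree is asymptotically periodic or
asymptotically degenerate. -/
theorem asympPeriodic_or_asympDegenerate {T : Type*} [MetricSpace T]
    (hT : IsTreeSpace T) (f : T → T) (hf : Continuous f) :
    ∀ A : Set T, IsSubcontinuum A →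
      AsympPeriodic f A ∨
        Tendsto (fun n : ℕ => diam (f^[n] '' A)) atTop (𝓝 0) := by
  rintro A ⟨-, hA, hAc⟩
  by_cases hper : ∃ n, ∃ c ∈ f^[n] '' A, c ∈ Function.periodicPts f
  · obtain ⟨n, c, hcA, hc⟩ := hper
    exact Or.inl (hT.asympPeriodic_of_mem_periodicPts hf hA hAc.isPreconnected hcA hc)
  · push Not at hper
    exact Or.inr (hT.tendsto_diam_of_notMem_periodicPts hf hA hAc hper)
end

section
/- Let f : T → T be a continuous map of a tree T, and let F : Con(T) → Con(T) be the induced map on the hyperspace of subcontinua with the Hausdorff metric, F(A) = f(A). Then the topological entropies coincide: h(F) = h(f). -/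
open Set Filter Metric Topology TopologicalSpace

/-!
As long as the images of a subcontinuum `A` miss a finite mesh `P`, they are small and shadowed by
the orbit of any point of `A`; from the first time they meet `P` they are the images of a
subcontinuum meeting `P`. Hence `h(F) ≤ h(f) + h(F, {A | A ∩ P ≠ ∅})`, and the last term vanishes:
a subcontinuum through `p` is the union of its traces on finitely many arcs `[p, q]`, and on each
arc the possible traces are initial segments, which form a chain. The itineraries of these segments,
as the sets of all pairs (cell, time) visited before time `n` with respect to a fixed finite cover,
again form a chain, now of subsets of a set of size `O(n)`, so only polynomially many occur.
-/

theorem map_nhdsWithin_of_injOn {X Y : Type*} [TopologicalSpace X] [TopologicalSpace Y]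
    [T2Space Y] {φ : X → Y} {K : Set X} (hK : IsCompact K) (hc : ContinuousOn φ K)
    (hi : InjOn φ K) {t : X} (ht : t ∈ K) : map φ (𝓝[K] t) = 𝓝[φ '' K] φ t := by
  have := isCompact_iff_compactSpace.1 hK
  have hemb := (hc.domRestrict.isClosedEmbedding hi.injective).isEmbedding
  rw [nhdsWithin_eq_map_subtype_coe ht, map_map, ← range_domRestrict]
  exact hemb.map_nhds_eq ⟨t, ht⟩

section Arcs

variable {T : Type*} [TopologicalSpace T] {A B : Set T} {x y z : T}

/-- `A` is a possibly degenerate arc from `x` to `y`. Unlike in `IsArcBetween`, a single point is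
allowed and the parametrising interval is arbitrary, so that sub-arcs and concatenations need no
reparametrisation. -/
def IsIntervalArc (A : Set T) (x y : T) : Prop :=
  ∃ (φ : ℝ → T) (a b : ℝ), a ≤ b ∧ ContinuousOn φ (Icc a b) ∧ InjOn φ (Icc a b) ∧
    φ a = x ∧ φ b = y ∧ φ '' Icc a b = A

namespace IsIntervalArc

theorem singleton (x : T) : IsIntervalArc {x} x x :=
  ⟨fun _ => x, 0, 0, le_rfl, continuousOn_const, by simp, rfl, rfl, by simp⟩

theorem symm (h : IsIntervalArc A x y) : IsIntervalArc A y x := by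
  obtain ⟨φ, a, b, hab, hc, hi, rfl, rfl, rfl⟩ := h
  have himage : Neg.neg '' Icc (-b) (-a) = Icc a b := by simp
  have hmaps : MapsTo Neg.neg (Icc (-b) (-a)) (Icc a b) := himage ▸ mapsTo_image _ _
  exact ⟨φ ∘ Neg.neg, -b, -a, neg_le_neg hab, hc.comp continuous_neg.continuousOn hmaps,
    hi.comp neg_injective.injOn hmaps, by simp, by simp, by rw [image_comp, himage]⟩

theorem exists_param_from (h : IsIntervalArc A x y) (c : ℝ) :
    ∃ (φ : ℝ → T) (d : ℝ), c ≤ d ∧ ContinuousOn φ (Icc c d) ∧ InjOn φ (Icc c d) ∧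
      φ c = x ∧ φ d = y ∧ φ '' Icc c d = A := by
  obtain ⟨φ, a, b, hab, hc, hi, rfl, rfl, rfl⟩ := h
  have himage : (fun t => a - c + t) '' Icc c (c + (b - a)) = Icc a b := by simp
  have hmaps : MapsTo (fun t => a - c + t) (Icc c (c + (b - a))) (Icc a b) :=
    himage ▸ mapsTo_image _ _
  exact ⟨φ ∘ fun t => a - c + t, c + (b - a), by linarith, hc.comp (by fun_prop) hmaps,
    hi.comp (add_right_injective _).injOn hmaps, by simp,
    congrArg φ (by ring), by rw [image_comp, himage]⟩

theorem left_mem (h : IsIntervalArc A x y) : x ∈ A := by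
  obtain ⟨φ, a, b, hab, -, -, rfl, -, rfl⟩ := h
  exact mem_image_of_mem φ (left_mem_Icc.2 hab)

theorem right_mem (h : IsIntervalArc A x y) : y ∈ A :=
  h.symm.left_mem

theorem isCompact (h : IsIntervalArc A x y) : IsCompact A := by
  obtain ⟨φ, a, b, -, hc, -, -, -, rfl⟩ := h
  exact isCompact_Icc.image_of_continuousOn hc

theorem isPreconnected (h : IsIntervalArc A x y) : IsPreconnected A := by
  obtain ⟨φ, a, b, -, hc, -, -, -, rfl⟩ := h
  exact isPreconnected_Icc.image φ hc

theorem image_uIcc {φ : ℝ → T} {s t : ℝ} (hc : ContinuousOn φ (uIcc s t))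
    (hi : InjOn φ (uIcc s t)) : IsIntervalArc (φ '' uIcc s t) (φ s) (φ t) := by
  wlog hst : s ≤ t generalizing s t
  · rw [uIcc_comm] at hc hi ⊢
    exact (this hc hi (le_of_not_ge hst)).symm
  · rw [uIcc_of_le hst] at hc hi ⊢
    exact ⟨φ, s, t, hst, hc, hi, rfl, rfl, rfl⟩

theorem exists_subarc (h : IsIntervalArc A x y) {u v : T} (hu : u ∈ A) (hv : v ∈ A) :
    ∃ B ⊆ A, IsIntervalArc B u v := by
  obtain ⟨φ, a, b, -, hc, hi, -, -, rfl⟩ := h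
  obtain ⟨s, hs, rfl⟩ := hu
  obtain ⟨t, ht, rfl⟩ := hv
  have hsub : uIcc s t ⊆ Icc a b := uIcc_subset_Icc hs ht
  exact ⟨φ '' uIcc s t, image_mono hsub, image_uIcc (hc.mono hsub) (hi.mono hsub)⟩

theorem exists_subarc_to_first_hit (h : IsIntervalArc A x y) (hB : IsClosed B) (hy : y ∈ B) :
    ∃ w ∈ B, ∃ A' ⊆ A, IsIntervalArc A' x w ∧ A' ∩ B ⊆ {w} := by
  obtain ⟨φ, a, b, hab, hc, hi, rfl, rfl, rfl⟩ := h
  have hK : IsCompact (Icc a b ∩ φ ⁻¹' B) :=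
    isCompact_Icc.of_isClosed_subset (hc.preimage_isClosed_of_isClosed isClosed_Icc hB)
      inter_subset_left
  obtain ⟨s, ⟨hs, hsB⟩, hmin⟩ := hK.exists_isLeast ⟨b, right_mem_Icc.2 hab, hy⟩
  have hsub : Icc a s ⊆ Icc a b := Icc_subset_Icc_right hs.2
  refine ⟨φ s, hsB, φ '' Icc a s, image_mono hsub,
    ⟨φ, a, s, hs.1, hc.mono hsub, hi.mono hsub, rfl, rfl, rfl⟩, ?_⟩
  rintro _ ⟨⟨u, hu, rfl⟩, huB⟩
  exact congrArg φ (hu.2.antisymm (hmin ⟨hsub hu, huB⟩))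

theorem union (hA : IsIntervalArc A x y) (hB : IsIntervalArc B y z) (hAB : A ∩ B ⊆ {y}) :
    IsIntervalArc (A ∪ B) x z := by
  obtain ⟨φ, a, b, hab, hφc, hφi, rfl, rfl, rfl⟩ := hA
  obtain ⟨ψ, c, hbc, hψc, hψi, hψb, rfl, rfl⟩ := hB.exists_param_from b
  let χ : ℝ → T := (Iic b).piecewise φ ψ
  have hχφ : EqOn χ φ (Icc a b) := fun u hu => piecewise_eq_of_mem _ _ _ hu.2
  have hχψ : EqOn χ ψ (Icc b c) := by
    intro u hu
    rcases hu.1.eq_or_lt with rfl | hbu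
    · rw [hψb]
      exact hχφ (right_mem_Icc.2 hab)
    · exact piecewise_eq_of_notMem _ _ _ hbu.not_ge
  refine ⟨χ, a, c, hab.trans hbc, ?_, ?_, hχφ (left_mem_Icc.2 hab), hχψ (right_mem_Icc.2 hbc), ?_⟩
  · rw [← Icc_union_Icc_eq_Icc hab hbc]
    exact (hφc.congr hχφ).union_of_isClosed (hψc.congr hχψ) isClosed_Icc isClosed_Icc
  · rw [← Icc_union_Ioc_eq_Icc hab hbc, injOn_union
      (disjoint_left.2 fun u hu hu' => hu'.1.not_ge hu.2)]
    refine ⟨hφi.congr hχφ.symm, (hψi.congr hχψ.symm).mono Ioc_subset_Icc_self, ?_⟩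
    intro u hu v hv huv
    rw [hχφ hu, hχψ (Ioc_subset_Icc_self hv)] at huv
    have hvb : ψ v = ψ b := by
      rw [hψb]
      exact hAB ⟨⟨u, hu, huv⟩, v, Ioc_subset_Icc_self hv, rfl⟩
    exact hv.1.ne' (hψi (Ioc_subset_Icc_self hv) (left_mem_Icc.2 hbc) hvb)
  · rw [← Icc_union_Icc_eq_Icc hab hbc, image_union, hχφ.image_eq, hχψ.image_eq]

variable [T2Space T]

theorem exists_trans (hA : IsIntervalArc A x y) (hB : IsIntervalArc B y z) :
    ∃ C ⊆ A ∪ B, IsIntervalArc C x z := by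
  obtain ⟨w, hwB, A', hA'A, hA', hA'B⟩ :=
    hA.exists_subarc_to_first_hit hB.isCompact.isClosed hB.left_mem
  obtain ⟨B', hB'B, hB'⟩ := hB.exists_subarc hwB hB.right_mem
  exact ⟨A' ∪ B', union_subset_union hA'A hB'B,
    hA'.union hB' ((inter_subset_inter_right A' hB'B).trans hA'B)⟩

theorem eventually_exists_subset (hA : IsIntervalArc A x y) {w : T} {U : Set T} (hU : U ∈ 𝓝 w) :
    ∀ᶠ w' in 𝓝[A] w, ∃ B ⊆ U, IsIntervalArc B w w' := by
  by_cases hwA : w ∈ A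
  swap
  · rw [notMem_closure_iff_nhdsWithin_eq_bot.1 (by rwa [hA.isCompact.isClosed.closure_eq])]
    exact eventually_bot
  obtain ⟨φ, a, b, -, hc, hi, -, -, rfl⟩ := hA
  obtain ⟨t, ht, rfl⟩ := hwA
  rw [← map_nhdsWithin_of_injOn isCompact_Icc hc hi ht, eventually_map]
  have huIcc : Tendsto (fun s => uIcc t s) (𝓝[Icc a b] t) (𝓝[Icc a b] t).smallSets :=
    (tendsto_const_pure.mono_right (pure_le_nhdsWithin ht)).uIcc tendsto_id
  filter_upwards [huIcc.eventually (eventually_smallSets_subset.2 (hc t ht hU)),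
    self_mem_nhdsWithin] with s hsU hs
  have hsub : uIcc t s ⊆ Icc a b := uIcc_subset_Icc ht hs
  exact ⟨φ '' uIcc t s, image_subset_iff.2 hsU, image_uIcc (hc.mono hsub) (hi.mono hsub)⟩

end IsIntervalArc

theorem IsArcBetween.isIntervalArc (h : IsArcBetween A x y) : IsIntervalArc A x y := by
  obtain ⟨e, rfl, rfl⟩ := h
  let φ : ℝ → T := IccExtend zero_le_one (Subtype.val ∘ e)
  have hφ : (Icc 0 1).domRestrict φ = Subtype.val ∘ e := funext fun t => IccExtend_val _ _ t
  refine ⟨φ, 0, 1, zero_le_one, ?_, ?_, IccExtend_left _ _, IccExtend_right _ _, ?_⟩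
  · exact (Continuous.Icc_extend' (continuous_subtype_val.comp e.continuous)).continuousOn
  · rw [injOn_iff_injective, hφ]
    exact Subtype.val_injective.comp e.injective
  · rw [← range_domRestrict, hφ, e.surjective.range_comp, Subtype.range_coe]

theorem IsIntervalArc.isArcBetween [T2Space T] (h : IsIntervalArc A x y) (hxy : x ≠ y) :
    IsArcBetween A x y := by
  obtain ⟨φ, a, b, hab, hc, hi, rfl, rfl, rfl⟩ := h
  have hlt : a < b := hab.lt_of_ne (by rintro rfl; exact hxy rfl)
  have hemb : IsEmbedding ((Icc a b).domRestrict φ ∘ (iccHomeoI a b hlt).symm) :=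
    (hc.domRestrict.isClosedEmbedding hi.injective).isEmbedding.comp
      (iccHomeoI a b hlt).symm.isEmbedding
  have hrange : range ((Icc a b).domRestrict φ ∘ (iccHomeoI a b hlt).symm) = φ '' Icc a b := by
    rw [(iccHomeoI a b hlt).symm.surjective.range_comp, range_domRestrict]
  rw [← hrange]
  refine ⟨hemb.toHomeomorph, ?_, ?_⟩ <;> simp

section Mesh

variable {M : Type*} [PseudoMetricSpace M] {ε : ℝ}

/-- `P` cuts the space into pieces of diameter at most `ε`: every connected set of larger diameter
meets `P`. -/
def IsMesh (P : Set M) (ε : ℝ) : Prop :=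
  ∀ C : Set M, IsPreconnected C → Disjoint C P → ∀ x ∈ C, ∀ y ∈ C, dist x y ≤ ε

theorem exists_finite_meeting_long_intervals (a b : ℝ) {δ : ℝ} (hδ : 0 < δ) :
    ∃ N : Set ℝ, N.Finite ∧
      ∀ s ∈ Icc a b, ∀ t ∈ Icc a b, δ ≤ dist s t → (uIcc s t ∩ N).Nonempty := by
  obtain ⟨N, -, hN, hcover⟩ := (isCompact_Icc (a := a) (b := b)).finite_cover_balls (half_pos hδ)
  refine ⟨N, hN, fun s hs t ht hst => ?_⟩
  wlog hle : s ≤ t generalizing s t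
  · rw [uIcc_comm]
    exact this t ht s hs (dist_comm s t ▸ hst) (le_of_not_ge hle)
  have hmid : (s + t) / 2 ∈ Icc a b :=
    ⟨by linarith [hs.1, ht.1], by linarith [hs.2, ht.2]⟩
  obtain ⟨c, hcN, hc⟩ := mem_iUnion₂.1 (hcover hmid)
  rw [dist_comm, Real.dist_eq, abs_of_nonneg (sub_nonneg.2 hle)] at hst
  rw [mem_ball, Real.dist_eq, abs_lt] at hc
  rw [uIcc_of_le hle]
  exact ⟨c, ⟨by linarith [hc.2], by linarith [hc.1]⟩, hcN⟩

theorem IsIntervalArc.exists_mesh {A : Set M} {x y : M} (hA : IsIntervalArc A x y) (hε : 0 < ε) :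
    ∃ P : Set M, P.Finite ∧ ∀ u ∈ A, ∀ v ∈ A,
      ∃ B, IsIntervalArc B u v ∧ (Disjoint B P → dist u v ≤ ε) := by
  obtain ⟨φ, a, b, -, hc, hi, -, -, rfl⟩ := hA
  obtain ⟨δ, hδ, hφδ⟩ :=
    Metric.uniformContinuousOn_iff_le.1 (isCompact_Icc.uniformContinuousOn_of_continuous hc) ε hε
  obtain ⟨N, hN, hmeet⟩ := exists_finite_meeting_long_intervals a b hδ
  refine ⟨φ '' N, hN.image φ, ?_⟩
  rintro _ ⟨s, hs, rfl⟩ _ ⟨t, ht, rfl⟩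
  have hsub : uIcc s t ⊆ Icc a b := uIcc_subset_Icc hs ht
  refine ⟨φ '' uIcc s t, image_uIcc (hc.mono hsub) (hi.mono hsub), fun hdisj => ?_⟩
  refine hφδ s hs t ht (le_of_not_ge fun hst => ?_)
  obtain ⟨c, hcst, hcN⟩ := hmeet s hs t ht hst
  exact hdisj.le_bot ⟨mem_image_of_mem φ hcst, mem_image_of_mem φ hcN⟩

end Mesh

end Arcs

section Tree

variable {T : Type*} [MetricSpace T]

theorem IsIntervalArc.eq_treeArc (hT : IsTreeSpace T) {A : Set T} {x y : T}
    (h : IsIntervalArc A x y) : A = treeArc hT x y := by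
  unfold treeArc
  split_ifs with hxy
  · subst hxy
    obtain ⟨φ, a, b, hab, -, hi, rfl, hba, rfl⟩ := h
    obtain rfl := hi (right_mem_Icc.2 hab) (left_mem_Icc.2 hab) hba
    simp
  · exact (hT.uniqueArc x y hxy).choose_spec.2 A (h.isArcBetween hxy)

namespace IsTreeSpace

theorem isIntervalArc_treeArc (hT : IsTreeSpace T) (x y : T) :
    IsIntervalArc (treeArc hT x y) x y := by
  unfold treeArc
  split_ifs with h
  · subst h
    exact .singleton x
  · exact (hT.uniqueArc x y h).choose_spec.1.isIntervalArc

theorem treeArc_self (hT : IsTreeSpace T) (x : T) : treeArc hT x x = {x} :=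
  ((IsIntervalArc.singleton x).eq_treeArc hT).symm

theorem treeArc_comm (hT : IsTreeSpace T) (x y : T) : treeArc hT x y = treeArc hT y x :=
  (hT.isIntervalArc_treeArc x y).symm.eq_treeArc hT

theorem left_mem_treeArc (hT : IsTreeSpace T) (x y : T) : x ∈ treeArc hT x y :=
  (hT.isIntervalArc_treeArc x y).left_mem

theorem right_mem_treeArc (hT : IsTreeSpace T) (x y : T) : y ∈ treeArc hT x y :=
  (hT.isIntervalArc_treeArc x y).right_mem

theorem isClosed_treeArc (hT : IsTreeSpace T) (x y : T) : IsClosed (treeArc hT x y) :=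
  (hT.isIntervalArc_treeArc x y).isCompact.isClosed

theorem isPreconnected_treeArc (hT : IsTreeSpace T) (x y : T) :
    IsPreconnected (treeArc hT x y) :=
  (hT.isIntervalArc_treeArc x y).isPreconnected

theorem treeArc_subset_union (hT : IsTreeSpace T) (x y z : T) :
    treeArc hT x z ⊆ treeArc hT x y ∪ treeArc hT y z := by
  obtain ⟨C, hC, h⟩ := (hT.isIntervalArc_treeArc x y).exists_trans (hT.isIntervalArc_treeArc y z)
  exact h.eq_treeArc hT ▸ hC

theorem exists_finite_biUnion_treeArc (hT : IsTreeSpace T) :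
    ∃ E : Set (T × T), E.Finite ∧ ⋃ e ∈ E, treeArc hT e.1 e.2 = univ := by
  rcases hT.finiteArcs with ⟨x, hx⟩ | ⟨s, hs, hcover⟩
  · exact ⟨{(x, x)}, finite_singleton _, by simp [hx, treeArc_self]⟩
  · have hends : ∀ A : s, ∃ e : T × T, A = treeArc hT e.1 e.2 := fun A => by
      obtain ⟨e⟩ := hs A A.2
      exact ⟨(_, _), (IsArcBetween.isIntervalArc ⟨e, rfl, rfl⟩).eq_treeArc hT⟩
    choose e he using hends
    refine ⟨range e, finite_range e, ?_⟩
    rw [biUnion_range, ← hcover, sUnion_eq_iUnion]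
    exact iUnion_congr fun A => (he A).symm

theorem eventually_treeArc_subset (hT : IsTreeSpace T) {w : T} {U : Set T} (hU : U ∈ 𝓝 w) :
    ∀ᶠ w' in 𝓝 w, treeArc hT w w' ⊆ U := by
  obtain ⟨E, hE, hcover⟩ := hT.exists_finite_biUnion_treeArc
  rw [← nhdsWithin_univ, ← hcover, nhdsWithin_biUnion hE]
  simp only [eventually_iSup]
  intro e _
  filter_upwards [(hT.isIntervalArc_treeArc e.1 e.2).eventually_exists_subset hU]
    with w' ⟨B, hBU, hB⟩
  exact hB.eq_treeArc hT ▸ hBU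

theorem treeArc_subset_of_isPreconnected (hT : IsTreeSpace T) {C : Set T} (hC : IsPreconnected C)
    {x y : T} (hx : x ∈ C) (hy : y ∈ C) : treeArc hT x y ⊆ C := by
  intro z hz
  by_contra hzC
  -- On `C ⊆ {z}ᶜ`, the relation `z ∉ [u, v]` is an equivalence with open classes.
  refine hC.induction₂ (fun u v => z ∉ treeArc hT u v) (fun u hu => ?_) ?_ ?_ hx hy hz
  · have hU : {z}ᶜ ∈ 𝓝 u := isOpen_compl_singleton.mem_nhds fun h => hzC (h ▸ hu)
    filter_upwards [nhdsWithin_le_nhds (hT.eventually_treeArc_subset hU)] with v hv hzv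
    exact hv hzv rfl
  · intro u v w _ _ _ huv hvw hzuw
    exact (hT.treeArc_subset_union u v w hzuw).elim huv hvw
  · intro u v _ _ huv
    rwa [hT.treeArc_comm]

theorem treeArc_subset_of_mem (hT : IsTreeSpace T) {x y z : T} (hz : z ∈ treeArc hT x y) :
    treeArc hT x z ⊆ treeArc hT x y :=
  hT.treeArc_subset_of_isPreconnected (hT.isPreconnected_treeArc x y) (hT.left_mem_treeArc x y) hz

theorem mem_treeArc_or_mem_treeArc (hT : IsTreeSpace T) {x y z w : T} (hz : z ∈ treeArc hT x y)
    (hw : w ∈ treeArc hT x y) : z ∈ treeArc hT x w ∨ w ∈ treeArc hT x z := by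
  obtain ⟨φ, a, b, -, hc, hi, rfl, -, hφ⟩ := hT.isIntervalArc_treeArc x y
  have hinit : ∀ u ∈ Icc a b, φ '' Icc a u = treeArc hT (φ a) (φ u) := fun u hu =>
    have hsub : Icc a u ⊆ Icc a b := Icc_subset_Icc_right hu.2
    IsIntervalArc.eq_treeArc hT ⟨φ, a, u, hu.1, hc.mono hsub, hi.mono hsub, rfl, rfl, rfl⟩
  rw [← hφ] at hz hw
  obtain ⟨s, hs, rfl⟩ := hz
  obtain ⟨t, ht, rfl⟩ := hw
  rw [← hinit s hs, ← hinit t ht]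
  exact (le_total s t).imp (fun h => ⟨s, ⟨hs.1, h⟩, rfl⟩) fun h => ⟨t, ⟨ht.1, h⟩, rfl⟩

theorem isChain_inter_treeArc (hT : IsTreeSpace T) (p q : T) :
    IsChain (· ⊆ ·) ((· ∩ treeArc hT p q) '' {C | IsPreconnected C ∧ p ∈ C}) := by
  rintro _ ⟨C, ⟨hC, hpC⟩, rfl⟩ _ ⟨D, ⟨hD, hpD⟩, rfl⟩ -
  refine or_iff_not_imp_left.2 fun hCD w ⟨hwD, hw⟩ => ⟨?_, hw⟩
  obtain ⟨z, ⟨hzC, hz⟩, hzD⟩ := not_subset.1 hCD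
  rcases hT.mem_treeArc_or_mem_treeArc hz hw with h | h
  · exact absurd ⟨hT.treeArc_subset_of_isPreconnected hD hpD hwD h, hz⟩ hzD
  · exact hT.treeArc_subset_of_isPreconnected hC hpC hzC h

theorem exists_finset_biUnion_treeArc (hT : IsTreeSpace T) :
    ∃ Q : Finset T, ∀ p, ⋃ q ∈ Q, treeArc hT p q = univ := by
  classical
  obtain ⟨E, hE, hcover⟩ := hT.exists_finite_biUnion_treeArc
  lift E to Finset (T × T) using hE
  refine ⟨E.image Prod.fst ∪ E.image Prod.snd, fun p => eq_univ_of_forall fun x => ?_⟩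
  obtain ⟨e, he, hx⟩ := mem_iUnion₂.1 (hcover ▸ mem_univ x)
  rcases hT.treeArc_subset_union e.1 p e.2 hx with h | h
  · rw [hT.treeArc_comm] at h
    exact mem_biUnion (Finset.mem_union_left _ (Finset.mem_image_of_mem _ he)) h
  · exact mem_biUnion (Finset.mem_union_right _ (Finset.mem_image_of_mem _ he)) h

theorem exists_median (hT : IsTreeSpace T) (x y p : T) :
    ∃ m ∈ treeArc hT x y, m ∈ treeArc hT p x ∧ m ∈ treeArc hT p y := by
  rw [hT.treeArc_comm p x]
  exact isPreconnected_closed_iff.1 (hT.isPreconnected_treeArc x y) _ _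
    (hT.isClosed_treeArc x p) (hT.isClosed_treeArc p y) (hT.treeArc_subset_union x p y)
    ⟨x, hT.left_mem_treeArc x y, hT.left_mem_treeArc x p⟩
    ⟨y, hT.right_mem_treeArc x y, hT.right_mem_treeArc p y⟩

theorem exists_finite_isMesh (hT : IsTreeSpace T) {ε : ℝ} (hε : 0 < ε) :
    ∃ P : Set T, P.Finite ∧ P.Nonempty ∧ IsMesh P ε := by
  obtain ⟨p⟩ := hT.conn.toNonempty
  obtain ⟨Q, hQ⟩ := hT.exists_finset_biUnion_treeArc
  choose P hPfin hP using fun q => (hT.isIntervalArc_treeArc p q).exists_mesh (half_pos hε)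
  refine ⟨insert p (⋃ q ∈ Q, P q), (Q.finite_toSet.biUnion fun q _ => hPfin q).insert p,
    insert_nonempty _ _, fun C hC hCP x hx y hy => ?_⟩
  have hdist : ∀ u ∈ C, ∀ v ∈ C, ∀ q ∈ Q, u ∈ treeArc hT p q → v ∈ treeArc hT p q →
      dist u v ≤ ε / 2 := by
    intro u hu v hv q hq huq hvq
    obtain ⟨B, hB, hBdist⟩ := hP q u huq v hvq
    rw [hB.eq_treeArc hT] at hBdist
    exact hBdist (hCP.mono (hT.treeArc_subset_of_isPreconnected hC hu hv)
      ((subset_biUnion_of_mem (u := P) hq).trans (subset_insert _ _)))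
  obtain ⟨m, hm, hmx, hmy⟩ := hT.exists_median x y p
  have hmC : m ∈ C := hT.treeArc_subset_of_isPreconnected hC hx hy hm
  obtain ⟨q, hq, hxq⟩ := mem_iUnion₂.1 (hQ p ▸ mem_univ x)
  obtain ⟨r, hr, hyr⟩ := mem_iUnion₂.1 (hQ p ▸ mem_univ y)
  calc dist x y ≤ dist x m + dist m y := dist_triangle x m y
    _ ≤ ε / 2 + ε / 2 := add_le_add
      (hdist x hx m hmC q hq hxq (hT.treeArc_subset_of_mem hxq hmx))
      (hdist m hmC y hy r hr (hT.treeArc_subset_of_mem hyr hmy) hyr)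
    _ = ε := add_halves ε

end IsTreeSpace

end Tree

section Patterns

theorem encard_le_of_isChain {κ : Type*} [Finite κ] {S : Set (Set κ)}
    (hS : IsChain (· ⊆ ·) S) : S.encard ≤ Nat.card κ + 1 := by
  have hmaps : MapsTo ncard S (Finset.range (Nat.card κ + 1)) := fun s _ => by
    simpa [Nat.lt_succ_iff] using ncard_le_card s
  have hinj : InjOn ncard S := fun s hs t ht hst => (hS.total hs ht).elim
    (fun h => eq_of_subset_of_ncard_le h hst.ge) fun h => (eq_of_subset_of_ncard_le h hst.le).symm
  simpa only [encard_coe_eq_coe_finsetCard, Finset.card_range, Nat.cast_add, Nat.cast_one]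
    using encard_le_encard_of_injOn hmaps hinj

theorem IsTreeSpace.encard_image_biUnion_le {T κ : Type*} [MetricSpace T] [Finite κ]
    (hT : IsTreeSpace T) (N : T → Set κ) (p : T) {Q : Finset T}
    (hQ : ⋃ q ∈ Q, treeArc hT p q = univ) :
    ((fun C => ⋃ x ∈ C, N x) '' {C | IsPreconnected C ∧ p ∈ C}).encard ≤
      (Nat.card κ + 1) ^ Q.card := by
  let S : Q → Set (Set κ) := fun q =>
    (fun C => ⋃ x ∈ C, N x) '' ((· ∩ treeArc hT p q) '' {C | IsPreconnected C ∧ p ∈ C})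
  have hS : ∀ q, (S q).encard ≤ Nat.card κ + 1 := fun q =>
    encard_le_of_isChain ((hT.isChain_inter_treeArc p q).image_of_map_rel _ _ _
      fun _ _ h => biUnion_subset_biUnion_left h)
  have hsub : (fun C => ⋃ x ∈ C, N x) '' {C | IsPreconnected C ∧ p ∈ C} ⊆
      (fun g => ⋃ q, g q) '' univ.pi S := by
    rintro _ ⟨C, hC, rfl⟩
    refine ⟨fun q => ⋃ x ∈ C ∩ treeArc hT p q, N x, fun q _ => ⟨_, ⟨C, hC, rfl⟩, rfl⟩, ?_⟩
    have hQ' : ⋃ q : Q, treeArc hT p q = univ := (iUnion_coe_set _ _).trans hQ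
    simp only [← biUnion_iUnion, ← inter_iUnion, hQ', inter_univ]
  calc _ ≤ (univ.pi S).encard := (encard_le_encard hsub).trans (encard_image_le _ _)
    _ = ∏ q, (S q).encard := encard_pi_eq_prod_encard
    _ ≤ ∏ _q : Q, ((Nat.card κ : ℕ∞) + 1) := Finset.prod_le_prod' fun q _ => hS q
    _ = (Nat.card κ + 1) ^ Q.card := by simp

end Patterns

section DynamicalCovers

open scoped ENNReal

variable {X : Type*}

theorem coverMincard_le_encard_image {γ : Type*} {F : X → X} {S : Set X} {U : SetRel X X} {n : ℕ}
    {c : X → γ} (h : ∀ x ∈ S, ∀ y ∈ S, c x = c y → (x, y) ∈ Dynamics.dynEntourage F U n) :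
    Dynamics.coverMincard F S U n ≤ (c '' S).encard := by
  rcases (c '' S).finite_or_infinite with hfin | hinf
  swap
  · exact hinf.encard_eq ▸ le_top
  obtain ⟨R, hRS, hR⟩ := exists_subset_bijOn S c
  have hRfin : R.Finite := hR.finite_iff_finite.2 hfin
  lift R to Finset X using hRfin
  rw [← hR.image_eq, hR.injOn.encard_image, encard_coe_eq_coe_finsetCard]
  refine Dynamics.IsDynCoverOf.coverMincard_le_card fun x hx => ?_
  obtain ⟨y, hy, hyx⟩ := hR.surjOn (mem_image_of_mem c hx)
  exact ⟨y, hy, h x hx y (hRS hy) hyx.symm⟩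

theorem coverMincard_le_encard_of_shadowing [PseudoMetricSpace X] {γ : Type*} {F : X → X}
    {S : Set X} {r : ℝ} {n : ℕ} {Γ : Set γ} (g : γ → ℕ → X)
    (h : ∀ x ∈ S, ∃ c ∈ Γ, ∀ j < n, dist (F^[j] x) (g c j) ≤ r) :
    Dynamics.coverMincard F S {e | dist e.1 e.2 ≤ 2 * r} n ≤ Γ.encard := by
  rcases S.eq_empty_or_nonempty with rfl | ⟨x₀, hx₀⟩
  · simp
  have : Nonempty γ := ⟨(h x₀ hx₀).choose⟩
  choose! c hcΓ hc using h
  refine (coverMincard_le_encard_image (c := c) fun x hx y hy hxy => ?_).trans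
    (encard_le_encard (image_subset_iff.2 hcΓ))
  refine Dynamics.mem_dynEntourage.2 fun j hj => ?_
  calc dist (F^[j] x) (F^[j] y) ≤ dist (F^[j] x) (g (c x) j) + dist (F^[j] y) (g (c x) j) :=
        dist_triangle_right _ _ _
    _ ≤ r + r := add_le_add (hc x hx j hj) (hxy ▸ hc y hy j hj)
    _ = 2 * r := (two_mul r).symm

theorem expGrowthSup_add_one_pow (d : ℕ) :
    ExpGrowth.expGrowthSup (fun n : ℕ => ((n : ℝ≥0∞) + 1) ^ d) = 0 := by
  have hmono : Monotone fun n : ℕ => ((n : ℝ≥0∞) + 1) ^ d := fun m n hmn => by dsimp only; gcongr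
  refine le_antisymm ?_ (hmono.expGrowthSup_nonneg fun h => by simpa using congrFun h 0)
  refine EReal.le_of_forall_lt_iff_le.1 fun b hb => ?_
  have hlittle : (fun x : ℝ => x ^ d) =o[atTop] fun x => Real.exp (b * x) :=
    isLittleO_pow_exp_pos_mul_atTop d (EReal.coe_pos.1 hb)
  have hshift : Tendsto (fun n : ℕ => (n : ℝ) + 1) atTop atTop :=
    tendsto_atTop_add_const_right _ _ tendsto_natCast_atTop_atTop
  refine Eventually.expGrowthSup_le ?_
  filter_upwards [hshift.eventually (hlittle.bound (Real.exp_pos (-b)))] with n hn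
  rw [Real.norm_of_nonneg (by positivity), Real.norm_of_nonneg (Real.exp_pos _).le,
    ← Real.exp_add, show -b + b * (n + 1) = b * n by ring] at hn
  calc ((n : ℝ≥0∞) + 1) ^ d = ENNReal.ofReal (((n : ℝ) + 1) ^ d) := by
        rw [ENNReal.ofReal_pow (by positivity), ENNReal.ofReal_add (by positivity) zero_le_one,
          ENNReal.ofReal_natCast, ENNReal.ofReal_one]
    _ ≤ ENNReal.ofReal (Real.exp (b * n)) := ENNReal.ofReal_le_ofReal hn
    _ = EReal.exp (b * n) := by rw [← EReal.exp_coe, EReal.coe_mul, EReal.coe_natCast]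

end DynamicalCovers

section Hyperspace

variable {T : Type*} [MetricSpace T] {f : T → T}

theorem coe_iterate_indCon (hf : Continuous f) (j : ℕ) (A : SubCon T) :
    (((indCon f hf)^[j] A).1 : Set T) = f^[j] '' (A.1 : Set T) := by
  have h : Function.Semiconj (fun A : SubCon T => (A.1 : Set T)) (indCon f hf) (image f) :=
    fun _ => rfl
  rw [image_iterate_eq]
  exact h.iterate_right j A

theorem dist_subCon_le {A B : SubCon T} {r : ℝ}
    (hAB : ∀ x ∈ (A.1 : Set T), ∃ y ∈ (B.1 : Set T), dist x y ≤ r)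
    (hBA : ∀ y ∈ (B.1 : Set T), ∃ x ∈ (A.1 : Set T), dist y x ≤ r) : dist A B ≤ r := by
  rw [Subtype.dist_eq, NonemptyCompacts.dist_eq]
  obtain ⟨x, hx⟩ := A.2.nonempty
  obtain ⟨y, -, hxy⟩ := hAB x hx
  exact hausdorffDist_le_of_mem_dist (dist_nonneg.trans hxy) hAB hBA

/-- The point `x` as an element of the hyperspace of subcontinua; this embeds a system into its
induced system. -/
def singletonSubCon (x : T) : SubCon T :=
  ⟨{x}, by simpa using isConnected_singleton⟩

theorem isometry_singletonSubCon : Isometry (singletonSubCon : T → SubCon T) :=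
  NonemptyCompacts.isometry_singleton

theorem semiconj_singletonSubCon (hf : Continuous f) :
    Function.Semiconj singletonSubCon f (indCon f hf) := fun x =>
  Subtype.ext (SetLike.coe_injective (by simp [singletonSubCon, indCon]))

theorem entropy_le_entropy_indCon (hf : Continuous f) : entropy f ≤ entropy (indCon f hf) := by
  have h := Dynamics.coverEntropy_image_of_comap inferInstance (semiconj_singletonSubCon hf) univ
  rw [isometry_singletonSubCon.isUniformInducing.comap_uniformSpace] at h
  exact h.symm.trans_le (Dynamics.coverEntropy_monotone _ (subset_univ _))

end Hyperspace

section ThroughPoint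

open scoped ENNReal

variable {T : Type*} [MetricSpace T] {f : T → T}

/-- The subcontinua that meet `P`; in particular `meeting {p}` consists of the subcontinua
through `p`. -/
def SubCon.meeting (P : Set T) : Set (SubCon T) :=
  {A | ((A.1 : Set T) ∩ P).Nonempty}

theorem SubCon.mem_meeting_singleton {A : SubCon T} {p : T} :
    A ∈ SubCon.meeting {p} ↔ p ∈ (A.1 : Set T) :=
  inter_singleton_nonempty

theorem SubCon.meeting_eq_biUnion (P : Set T) :
    SubCon.meeting P = ⋃ p ∈ P, SubCon.meeting {p} := by
  ext A
  simp only [mem_iUnion, mem_meeting_singleton, exists_prop, and_comm (a := _ ∈ P)]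
  rfl

theorem coverMincard_meeting_singleton_le (hT : IsTreeSpace T) (hf : Continuous f) (p : T)
    {Q D : Finset T} (hQ : ⋃ q ∈ Q, treeArc hT p q = univ) {r : ℝ}
    (hD : ∀ x, ∃ c ∈ D, dist x c ≤ r) (n : ℕ) :
    Dynamics.coverMincard (indCon f hf) (SubCon.meeting {p}) {e | dist e.1 e.2 ≤ 2 * r} n ≤
      (D.card * n + 1 : ℕ∞) ^ Q.card := by
  let visited : T → Set (D × Fin n) := fun x => {c | dist (f^[c.2] x) c.1 ≤ r}
  let code : SubCon T → Set (D × Fin n) := fun A => ⋃ x ∈ (A.1 : Set T), visited x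
  have hshadow : ∀ A B : SubCon T, code A = code B → ∀ j < n,
      ∀ x ∈ (((indCon f hf)^[j] A).1 : Set T), ∃ y ∈ (((indCon f hf)^[j] B).1 : Set T),
        dist x y ≤ 2 * r := by
    intro A B hAB j hj
    simp only [coe_iterate_indCon, forall_mem_image, exists_mem_image]
    intro x hx
    obtain ⟨c, hc, hxc⟩ := hD (f^[j] x)
    have hmem : (⟨⟨c, hc⟩, ⟨j, hj⟩⟩ : D × Fin n) ∈ code B := hAB ▸ mem_biUnion hx hxc
    obtain ⟨y, hy, hyc⟩ := mem_iUnion₂.1 hmem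
    refine ⟨y, hy, ?_⟩
    calc dist (f^[j] x) (f^[j] y) ≤ dist (f^[j] x) c + dist (f^[j] y) c := dist_triangle_right _ _ _
      _ ≤ r + r := add_le_add hxc hyc
      _ = 2 * r := (two_mul r).symm
  have hcode : ∀ A ∈ SubCon.meeting {p}, ∀ B ∈ SubCon.meeting {p}, code A = code B →
      (A, B) ∈ Dynamics.dynEntourage (indCon f hf) {e | dist e.1 e.2 ≤ 2 * r} n :=
    fun A _ B _ hAB => Dynamics.mem_dynEntourage.2 fun j hj =>
      dist_subCon_le (hshadow A B hAB j hj) (hshadow B A hAB.symm j hj)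
  have himage : code '' SubCon.meeting {p} ⊆
      (fun C => ⋃ x ∈ C, visited x) '' {C | IsPreconnected C ∧ p ∈ C} := by
    rintro _ ⟨A, hA, rfl⟩
    exact ⟨A.1, ⟨A.2.isPreconnected, SubCon.mem_meeting_singleton.1 hA⟩, rfl⟩
  calc _ ≤ (code '' SubCon.meeting {p}).encard := coverMincard_le_encard_image hcode
    _ ≤ (Nat.card (D × Fin n) + 1) ^ Q.card :=
      (encard_le_encard himage).trans (hT.encard_image_biUnion_le visited p hQ)
    _ = (D.card * n + 1 : ℕ∞) ^ Q.card := by simp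

theorem coverEntropy_meeting_singleton_le_zero (hT : IsTreeSpace T) (hf : Continuous f) (p : T) :
    Dynamics.coverEntropy (indCon f hf) (SubCon.meeting {p}) ≤ 0 := by
  have := hT.compact
  obtain ⟨Q, hQ⟩ := hT.exists_finset_biUnion_treeArc
  rw [Dynamics.coverEntropy_eq_iSup_basis uniformity_basis_dist_le]
  refine iSup₂_le fun ε hε => ?_
  obtain ⟨D, -, hDfin, hD⟩ := finite_cover_balls_of_compact (isCompact_univ (X := T)) (half_pos hε)
  lift D to Finset T using hDfin
  have hnet : ∀ x, ∃ c ∈ D, dist x c ≤ ε / 2 := fun x => by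
    obtain ⟨c, hc, hxc⟩ := mem_iUnion₂.1 (hD (mem_univ x))
    exact ⟨c, hc, (mem_ball.1 hxc).le⟩
  have hbound : ∀ n, (Dynamics.coverMincard (indCon f hf) (SubCon.meeting {p})
      {e | dist e.1 e.2 ≤ ε} n : ℝ≥0∞) ≤ ((D.card : ℝ≥0∞) + 1) ^ Q.card * (n + 1) ^ Q.card := by
    intro n
    have h := ENat.toENNReal_mono
      (coverMincard_meeting_singleton_le hT hf p (hQ p) hnet n)
    rw [mul_div_cancel₀ ε two_ne_zero] at h
    refine h.trans ?_
    rw [← mul_pow]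
    push_cast
    gcongr
    norm_cast
    nlinarith
  exact (ExpGrowth.expGrowthSup_le_of_eventually_le (by finiteness)
    (Eventually.of_forall hbound)).trans (expGrowthSup_add_one_pow _).le

theorem coverEntropy_meeting_le_zero (hT : IsTreeSpace T) (hf : Continuous f) {P : Set T}
    (hP : P.Finite) : Dynamics.coverEntropy (indCon f hf) (SubCon.meeting P) ≤ 0 := by
  lift P to Finset T using hP
  rw [SubCon.meeting_eq_biUnion]
  simp only [Finset.mem_coe, Dynamics.coverEntropy_biUnion_finset]
  exact iSup₂_le fun p _ => coverEntropy_meeting_singleton_le_zero hT hf p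

end ThroughPoint

section FirstHit

open scoped ENNReal Uniformity

variable {T : Type*} [MetricSpace T] {f : T → T} {P : Set T} {ε : ℝ}

theorem dist_iterate_indCon_singletonSubCon_le (hf : Continuous f) (hP : IsMesh P ε)
    {A : SubCon T} {x y : T} (hx : x ∈ (A.1 : Set T)) {j : ℕ}
    (hxy : dist (f^[j] x) (f^[j] y) ≤ ε) (hA : (indCon f hf)^[j] A ∉ SubCon.meeting P) :
    dist ((indCon f hf)^[j] A) (singletonSubCon (f^[j] y)) ≤ 2 * ε := by
  have hsmall : ∀ u ∈ f^[j] '' (A.1 : Set T), ∀ v ∈ f^[j] '' (A.1 : Set T), dist u v ≤ ε := by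
    rw [← coe_iterate_indCon hf]
    exact hP _ ((indCon f hf)^[j] A).2.isPreconnected
      (disjoint_iff_inter_eq_empty.2 (not_nonempty_iff_eq_empty.1 hA))
  have hnear : ∀ z ∈ f^[j] '' (A.1 : Set T), dist z (f^[j] y) ≤ 2 * ε := fun z hz => by
    linarith [dist_triangle z (f^[j] x) (f^[j] y), hsmall z hz _ (mem_image_of_mem _ hx)]
  refine dist_subCon_le ?_ ?_ <;>
  simp only [coe_iterate_indCon, singletonSubCon]
  · exact fun z hz => ⟨_, rfl, hnear z hz⟩
  · rintro _ rfl
    exact ⟨_, mem_image_of_mem _ hx, dist_comm (f^[j] x) _ ▸ hnear _ (mem_image_of_mem _ hx)⟩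

theorem exists_first_hit_time {X : Type*} (F : X → X) (M : Set X) (n : ℕ) (A : X) :
    ∃ k ≤ n, (∀ j < k, F^[j] A ∉ M) ∧ (k < n → F^[k] A ∈ M) := by
  classical
  have h : ∃ k, k = n ∨ F^[k] A ∈ M := ⟨n, .inl rfl⟩
  exact ⟨Nat.find h, Nat.find_min' h (.inl rfl), fun j hj => (not_or.1 (Nat.find_min h hj)).2,
    fun hn => (Nat.find_spec h).resolve_left hn.ne⟩

/-- The orbit of the point `y` before time `k`, and from then on the orbit of `B`. -/
noncomputable def switchedOrbit (hf : Continuous f) (y : T) (k : ℕ) (B : SubCon T) (j : ℕ) :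
    SubCon T :=
  if j < k then singletonSubCon (f^[j] y) else (indCon f hf)^[j - k] B

theorem exists_switchedOrbit_shadowing (hf : Continuous f) (hP : IsMesh P ε) {n : ℕ}
    {s : Set T} {t : Set (SubCon T)} (ht₀ : t.Nonempty)
    (hs : Dynamics.IsDynCoverOf f univ {e | dist e.1 e.2 ≤ ε} n s)
    (ht : Dynamics.IsDynCoverOf (indCon f hf) (SubCon.meeting P) {e | dist e.1 e.2 ≤ 2 * ε} n t)
    (A : SubCon T) :
    ∃ y ∈ s, ∃ k ≤ n, ∃ B ∈ t, ∀ j < n,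
      dist ((indCon f hf)^[j] A) (switchedOrbit hf y k B j) ≤ 2 * ε := by
  obtain ⟨x, hx⟩ := A.2.nonempty
  obtain ⟨y, hy, hxy⟩ := hs (mem_univ x)
  obtain ⟨k, hkn, hmiss, hhit⟩ := exists_first_hit_time (indCon f hf) (SubCon.meeting P) n A
  have htail : ∃ B ∈ t, ∀ j < n, k ≤ j →
      dist ((indCon f hf)^[j] A) ((indCon f hf)^[j - k] B) ≤ 2 * ε := by
    rcases hkn.lt_or_eq with hk | rfl
    · obtain ⟨B, hB, hAB⟩ := ht (hhit hk)
      refine ⟨B, hB, fun j hj hkj => ?_⟩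
      have h := Dynamics.mem_dynEntourage.1 hAB (j - k) (by lia)
      rwa [← Function.iterate_add_apply, Nat.sub_add_cancel hkj] at h
    · obtain ⟨B, hB⟩ := ht₀
      exact ⟨B, hB, fun j hj hkj => absurd hj hkj.not_gt⟩
  obtain ⟨B, hB, hAB⟩ := htail
  refine ⟨y, hy, k, hkn, B, hB, fun j hj => ?_⟩
  unfold switchedOrbit
  split_ifs with hjk
  · exact dist_iterate_indCon_singletonSubCon_le hf hP hx
      (Dynamics.mem_dynEntourage.1 hxy j hj) (hmiss j hjk)
  · exact hAB j hj (not_lt.1 hjk)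

theorem coverMincard_indCon_le (hf : Continuous f) (hP : IsMesh P ε) (hP₀ : P.Nonempty) (n : ℕ) :
    Dynamics.coverMincard (indCon f hf) univ {e | dist e.1 e.2 ≤ 2 * (2 * ε)} n ≤
      Dynamics.coverMincard f univ {e | dist e.1 e.2 ≤ ε} n * ((n + 1) *
        Dynamics.coverMincard (indCon f hf) (SubCon.meeting P) {e | dist e.1 e.2 ≤ 2 * ε} n) := by
  obtain ⟨p, hp⟩ := hP₀
  have hmeet₀ : (SubCon.meeting P).Nonempty := ⟨singletonSubCon p, p, rfl, hp⟩
  have hone : 1 ≤ Dynamics.coverMincard (indCon f hf) (SubCon.meeting P)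
      {e | dist e.1 e.2 ≤ 2 * ε} n := (Dynamics.one_le_coverMincard_iff _ _ _ _).2 hmeet₀
  have hone' : 1 ≤ Dynamics.coverMincard f univ {e | dist e.1 e.2 ≤ ε} n :=
    (Dynamics.one_le_coverMincard_iff _ _ _ _).2 ⟨p, mem_univ p⟩
  rcases eq_top_or_lt_top (Dynamics.coverMincard f univ {e | dist e.1 e.2 ≤ ε} n) with h | hs
  · rw [h, ENat.top_mul (mul_ne_zero (by simp) (zero_lt_one.trans_le hone).ne')]
    exact le_top
  rcases eq_top_or_lt_top (Dynamics.coverMincard (indCon f hf) (SubCon.meeting P)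
      {e | dist e.1 e.2 ≤ 2 * ε} n) with h | ht
  · rw [h, ENat.mul_top (by simp), ENat.mul_top (zero_lt_one.trans_le hone').ne']
    exact le_top
  obtain ⟨s, hs, hsc⟩ := (Dynamics.coverMincard_finite_iff _ _ _ _).1 hs
  obtain ⟨t, ht, htc⟩ := (Dynamics.coverMincard_finite_iff _ _ _ _).1 ht
  calc _ ≤ ((s : Set T) ×ˢ (Finset.range (n + 1) : Set ℕ) ×ˢ (t : Set (SubCon T))).encard := by
        refine coverMincard_le_encard_of_shadowing (fun c => switchedOrbit hf c.1 c.2.1 c.2.2)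
          fun A _ => ?_
        obtain ⟨y, hy, k, hk, B, hB, h⟩ :=
          exists_switchedOrbit_shadowing hf hP (ht.nonempty hmeet₀) hs ht A
        exact ⟨(y, k, B), ⟨hy, by simpa [Nat.lt_succ_iff] using hk, hB⟩, h⟩
    _ = _ := by
        simp only [encard_prod, encard_coe_eq_coe_finsetCard, Finset.card_range, hsc, htc,
          Nat.cast_add, Nat.cast_one]

theorem coverEntropyEntourage_indCon_le [CompactSpace T] (hf : Continuous f) (hP : IsMesh P ε)
    (hP₀ : P.Nonempty) (hε : 0 < ε) :
    Dynamics.coverEntropyEntourage (indCon f hf) univ {e | dist e.1 e.2 ≤ 2 * (2 * ε)} ≤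
      entropy f + Dynamics.coverEntropy (indCon f hf) (SubCon.meeting P) := by
  obtain ⟨p, hp⟩ := hP₀
  let u : ℕ → ℝ≥0∞ := fun n => Dynamics.coverMincard f univ {e | dist e.1 e.2 ≤ ε} n
  let b : ℕ → ℝ≥0∞ := fun n => ((n : ℝ≥0∞) + 1) ^ 1
  let v : ℕ → ℝ≥0∞ := fun n =>
    Dynamics.coverMincard (indCon f hf) (SubCon.meeting P) {e | dist e.1 e.2 ≤ 2 * ε} n
  have hε' : {e : T × T | dist e.1 e.2 ≤ ε} ∈ 𝓤 T := uniformity_basis_dist_le.mem_of_mem hε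
  have hu_bot : ExpGrowth.expGrowthSup u ≠ ⊥ := (EReal.bot_lt_zero.trans_le
    (Dynamics.coverEntropyEntourage_nonneg f ⟨p, mem_univ p⟩ _)).ne'
  have hu_top : ExpGrowth.expGrowthSup u ≠ ⊤ :=
    (Dynamics.coverEntropyEntourage_finite_of_isCompact_invariant isCompact_univ
      (mapsTo_univ f univ) hε').ne
  have hb : ExpGrowth.expGrowthSup b = 0 := expGrowthSup_add_one_pow 1
  calc _ ≤ ExpGrowth.expGrowthSup (u * (b * v)) := by
        refine ExpGrowth.expGrowthSup_monotone fun n => ?_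
        simpa [u, b, v] using ENat.toENNReal_mono (coverMincard_indCon_le hf hP ⟨p, hp⟩ n)
    _ ≤ ExpGrowth.expGrowthSup u + (ExpGrowth.expGrowthSup b + ExpGrowth.expGrowthSup v) :=
      (ExpGrowth.expGrowthSup_mul_le (.inl hu_bot) (.inl hu_top)).trans <| add_le_add_right
        (ExpGrowth.expGrowthSup_mul_le (.inl (by simp [hb])) (.inl (by simp [hb]))) _
    _ = ExpGrowth.expGrowthSup u + ExpGrowth.expGrowthSup v := by rw [hb, zero_add]
    _ ≤ _ := add_le_add (Dynamics.coverEntropyEntourage_le_coverEntropy _ _ hε')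
      (Dynamics.coverEntropyEntourage_le_coverEntropy _ _
        (uniformity_basis_dist_le.mem_of_mem (by positivity)))

end FirstHit

/-- the induced map on the hyperspace of subcontinua of a tree
has the same topological entropy as the base map. -/
theorem entropy_indCon_eq {T : Type*} [MetricSpace T]
    (hT : IsTreeSpace T) (f : T → T) (hf : Continuous f) :
    entropy (indCon f hf) = entropy f := by
  have := hT.compact
  refine le_antisymm ?_ (entropy_le_entropy_indCon hf)
  refine (Dynamics.coverEntropy_eq_iSup_basis uniformity_basis_dist_le _ _).trans_le
    (iSup₂_le fun ε hε => ?_)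
  obtain ⟨P, hPfin, hP₀, hP⟩ := hT.exists_finite_isMesh (ε := ε / 4) (by positivity)
  calc Dynamics.coverEntropyEntourage (indCon f hf) univ {e | dist e.1 e.2 ≤ ε}
      = Dynamics.coverEntropyEntourage (indCon f hf) univ
          {e | dist e.1 e.2 ≤ 2 * (2 * (ε / 4))} := by ring_nf
    _ ≤ entropy f + Dynamics.coverEntropy (indCon f hf) (SubCon.meeting P) :=
      coverEntropyEntourage_indCon_le hf hP hP₀ (by positivity)
    _ ≤ entropy f + 0 := by gcongr; exact coverEntropy_meeting_le_zero hT hf hPfin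
    _ = entropy f := add_zero _
end
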